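/- arXiv:1808.04744 — 4 statements merged into one kernel-verified Lean document; each statement's English description precedes it below -/
import Mathlib

section
/- For every integer n ≥ 2 and every ε > 0 there exists a finite set S of 4n points in the plane in general position and points u, v ∈ S such that every path between u and v in ΘΘ₆(S) has length at least (1 − ε)·(2n − 1)·|uv|. In particular, the spanning ratio of ΘΘ₆ on sets of N points can be Ω(N). -/
/-!
The point set is a double spiral flattened to a zigzag. Level `k` carries three nearly coincident
pivots and one outer point at distance about one from them, and odd levels are mirror images of even
ones. Consider two arms: the pivots of level `k` belong to the arm of the parity of `k`, its outer
point to the other arm. In `ΘΘ₆` the two arms are joined only at level one, and along an arm one can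
only step between consecutive levels, at cost about one per step. A pivot and the outer point of level
`n` are at distance about one, but a path between them has to descend to level one and climb up
again, which costs about `2n - 1`.

Quantitatively, the function `potential` (`±(k - 1/2)`, the sign given by the arm) is Lipschitz along
edges with a constant close to one (`edge_lipschitz`), so `path_lower_bound` bounds the length of a
path from below by the difference `2n - 1` of the potentials of its ends.

The work is in excluding all other edges (`edge_cases`). In the coordinates `X`, `Y`, `Z` with
`X + Y + Z = 0` with respect to the basis `1, e^{iπ/3}`, the cone of a difference vector is
determined by the signs of its coordinates, and projective distance is `√3/2` times the hexagonal
norm (`cone_hex`). Hence whether a point precedes another one in a cone depends only on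
coordinatewise comparisons (`Generic.before_iff`). An edge `u → v` is destroyed by a point of `S`
preceding `v` in the cone of `u`, or by an edge `w → v` of `Θ₆` with `w` preceding `u` in the cone of
`v`. For this only three families of edges of `Θ₆` are needed (`keyEdge_thetaEdge`). Levels at least
four apart are handled directly (`before_far`). Within four consecutive levels the small
perturbations of the points are integer multiples of a common infinitesimal, so that comparisons
are lexicographic comparisons of integer pairs and the required facts (`model_distinct`,
`model_keyEdge`, `model_badPair`) are finite computations.
-/

open Real

noncomputable section

/-- Counterclockwise angle in `[0, 2π)` from the positive x-axis to the direction of `z`. -/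
def argIn (z : ℂ) : ℝ := if 0 ≤ Complex.arg z then Complex.arg z else Complex.arg z + 2 * π

/-- The half-open cone `C_i(u)` with apex `u`: points `p ≠ u` whose direction from `u` has
counterclockwise angle in `[(i-1)π/3, iπ/3)`. -/
def cone (i : ℕ) (u : ℂ) : Set ℂ :=
  {p | p ≠ u ∧ argIn (p - u) ∈ Set.Ico (((i : ℝ) - 1) * (π / 3)) ((i : ℝ) * (π / 3))}

/-- The index `i ∈ {1, …, 6}` of the cone of `u` containing `v`. -/
def coneIdx (u v : ℂ) : ℕ := (⌊argIn (v - u) / (π / 3)⌋).toNat + 1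

/-- The angle of the bisector ray of the cone of `u` containing `v`. -/
def bisAngle (u v : ℂ) : ℝ := ((coneIdx u v : ℝ) - 1) * (π / 3) + π / 6

/-- The projective distance from `u` to `v`: the Euclidean distance from `u` to the
orthogonal projection of `v` onto the bisector ray of the cone of `u` containing `v`. -/
def projDist (u v : ℂ) : ℝ :=
  ((v - u) * Complex.exp (-(Complex.I * (bisAngle u v : ℂ)))).re

/-- `S` is in general position: no two points of `S` lie on a common line parallel to one of
the six rays from the origin at angles `jπ/3`. -/
def GenPos (S : Finset ℂ) : Prop :=
  ∀ u ∈ S, ∀ v ∈ S, u ≠ v → ∀ j : ℕ, argIn (v - u) ≠ (j : ℝ) * (π / 3)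

/-- `S` is in convex position: every point of `S` is an extreme point of the convex hull. -/
def ConvexPos (S : Finset ℂ) : Prop :=
  ∀ p ∈ S, p ∈ Set.extremePoints ℝ (convexHull ℝ (S : Set ℂ))

/-- `u → v` is a directed edge of `Θ₆(S)`: `v` minimizes the projective distance from `u`
among the points of `S` in the cone of `u` containing `v`. -/
def ThetaEdge (S : Finset ℂ) (u v : ℂ) : Prop :=
  u ∈ S ∧ v ∈ S ∧ v ≠ u ∧
    ∀ w ∈ S, w ∈ cone (coneIdx u v) u → projDist u v ≤ projDist u w

/-- `u → v` is a directed edge of `ΘΘ₆(S)`: it is an edge of `Θ₆(S)` and among all incoming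
`Θ₆`-edges `w → v` with `w` in the same cone of `v` as `u`, it minimizes `‖wv‖`. -/
def ThetaThetaEdge (S : Finset ℂ) (u v : ℂ) : Prop :=
  ThetaEdge S u v ∧
    ∀ w, ThetaEdge S w v → coneIdx v w = coneIdx v u → projDist u v ≤ projDist w v

/-- Undirected adjacency in `ΘΘ₆(S)`: paths may use edges in either direction. -/
def TTAdj (S : Finset ℂ) (u v : ℂ) : Prop := ThetaThetaEdge S u v ∨ ThetaThetaEdge S v u

/-- `p` is a path between `u` and `v` with respect to the adjacency relation `A`. -/
def IsPath (A : ℂ → ℂ → Prop) (u v : ℂ) (p : List ℂ) : Prop :=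
  p.Chain' A ∧ p.head? = some u ∧ p.getLast? = some v

/-- The Euclidean length of the polygonal path through the points of `p`. -/
def pathLength (p : List ℂ) : ℝ := (List.zipWith dist p p.tail).sum


/-! ### Sixty-degree coordinates, cones and projective distance -/

/-- The point with coordinates `(X, Y)` in the lattice basis `1, e^{iπ/3}`. -/
def hexPt (X Y : ℝ) : ℂ := X + Y * Complex.exp ((π / 3 : ℝ) * Complex.I)

/-- Signs of the three coordinates `X`, `Y`, `Z = -X-Y`; for vectors off the six rays the sign
pattern determines the cone. -/
def signs (X Y : ℝ) : Bool × Bool × Bool :=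
  (decide (0 < X), decide (0 < Y), decide (0 < -X - Y))

/-- The hexagonal norm, a constant multiple of the projective distance. -/
def hexNorm (X Y : ℝ) : ℝ := max |X| (max |Y| |X + Y|)

/-- The cone index belonging to a sign pattern (arbitrary on the two constant patterns). -/
def patIdx : Bool × Bool × Bool → ℕ
  | (true, true, _) => 1
  | (false, true, false) => 2
  | (false, true, true) => 3
  | (false, false, _) => 4
  | (true, false, true) => 5
  | (true, false, false) => 6

lemma argIn_polar {r θ : ℝ} (hr : 0 < r) (h0 : 0 ≤ θ) (h1 : θ < 2 * π) :
    argIn (r * Complex.exp (θ * Complex.I)) = θ := by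
  unfold argIn
  rw [Complex.arg_real_mul _ hr]
  by_cases h : θ ≤ π
  · have : Complex.arg (Complex.exp (θ * Complex.I)) = θ := by
      rw [Complex.exp_mul_I]
      exact Complex.arg_cos_add_sin_mul_I ⟨by linarith [pi_pos], h⟩
    rw [this, if_pos h0]
  · push Not at h
    have : Complex.arg (Complex.exp (θ * Complex.I)) = θ - 2 * π := by
      have h2 : Complex.exp (θ * Complex.I) = Complex.exp (((θ - 2 * π : ℝ) : ℂ) * Complex.I) := by
        rw [Complex.exp_eq_exp_iff_exists_int]
        exact ⟨1, by push_cast; ring⟩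
      rw [h2, Complex.exp_mul_I]
      exact Complex.arg_cos_add_sin_mul_I ⟨by linarith [pi_pos], by linarith [pi_pos]⟩
    rw [this, if_neg (by linarith)]
    ring

lemma exp_pi_div_three :
    Complex.exp ((π / 3 : ℝ) * Complex.I) = 1 / 2 + (√3 / 2 : ℝ) * Complex.I := by
  rw [Complex.exp_mul_I, ← Complex.ofReal_cos, ← Complex.ofReal_sin, cos_pi_div_three,
    sin_pi_div_three]
  push_cast
  ring

/-- Polar form of a vector strictly inside the first cone. -/
lemma polar_first_cone {s t : ℝ} (hs : 0 < s) (ht : 0 < t) :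
    ∃ r φ : ℝ, 0 < r ∧ 0 < φ ∧ φ < π / 3 ∧
      hexPt s t = r * Complex.exp (φ * Complex.I) := by
  have h3 : 0 < √3 := by positivity
  have him : (hexPt s t).im = t * (√3 / 2) := by
    rw [hexPt, exp_pi_div_three]
    simp
  have hre : (hexPt s t).re = s + t / 2 := by
    rw [hexPt, exp_pi_div_three]
    simp
    ring
  set z := hexPt s t with hz
  have hz0 : z ≠ 0 := by
    intro h
    rw [h] at hre
    simp at hre
    linarith
  have hr : 0 < ‖z‖ := norm_pos_iff.mpr hz0
  have hp : z = ‖z‖ * Complex.exp (Complex.arg z * Complex.I) :=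
    (Complex.norm_mul_exp_arg_mul_I z).symm
  have hre' : z.re = ‖z‖ * Real.cos z.arg := by
    conv_lhs => rw [hp]
    rw [Complex.re_ofReal_mul, Complex.exp_ofReal_mul_I_re]
  have him' : z.im = ‖z‖ * Real.sin z.arg := by
    conv_lhs => rw [hp]
    rw [Complex.im_ofReal_mul, Complex.exp_ofReal_mul_I_im]
  have hpos : 0 < z.arg := by
    have h0 : 0 ≤ z.arg := Complex.arg_nonneg_iff.mpr (by rw [him]; positivity)
    rcases h0.lt_or_eq with h | h
    · exact h
    · rw [← h] at him'
      simp at him'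
      rw [him] at him'
      nlinarith
  refine ⟨‖z‖, z.arg, hr, hpos, ?_, hp⟩
  by_contra hcon
  push Not at hcon
  have hs1 : Real.sin (π / 3 - z.arg) ≤ 0 :=
    Real.sin_nonpos_of_nonpos_of_neg_pi_le (by linarith)
      (by linarith [Complex.arg_le_pi z, pi_pos])
  rw [Real.sin_sub, cos_pi_div_three, sin_pi_div_three] at hs1
  have : √3 / 2 * z.re - 1 / 2 * z.im ≤ 0 := by
    rw [hre', him']
    nlinarith
  rw [hre, him] at this
  nlinarith [mul_pos h3 hs]

/-- Cone index and projective distance of a vector inside the cone number `j + 1`. -/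
lemma cone_data {s t : ℝ} (hs : 0 < s) (ht : 0 < t) (j : ℕ) (hj : j < 6) (u v : ℂ)
    (hv : v - u = hexPt s t * Complex.exp ((j * (π / 3) : ℝ) * Complex.I)) :
    coneIdx u v = j + 1 ∧ projDist u v = √3 / 2 * (s + t) ∧
      (j : ℝ) * (π / 3) < argIn (v - u) ∧ argIn (v - u) < ((j : ℝ) + 1) * (π / 3) := by
  obtain ⟨r, φ, hr, h0, h1, hp⟩ := polar_first_cone hs ht
  have hj' : (j : ℝ) + 1 ≤ 6 := by exact_mod_cast hj
  have hpi := pi_pos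
  have harg : argIn (v - u) = j * (π / 3) + φ := by
    have : v - u = r * Complex.exp (((j * (π / 3) + φ : ℝ) : ℂ) * Complex.I) := by
      rw [hv, hp, mul_assoc, ← Complex.exp_add]
      push_cast
      ring_nf
    rw [this]
    apply argIn_polar hr
    · positivity
    · nlinarith
  have hidx : coneIdx u v = j + 1 := by
    unfold coneIdx
    rw [harg]
    have : ⌊((j : ℝ) * (π / 3) + φ) / (π / 3)⌋ = (j : ℤ) := by
      rw [Int.floor_eq_iff]
      constructor
      · rw [le_div_iff₀ (by positivity)]
        push_cast
        linarith
      · rw [div_lt_iff₀ (by positivity)]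
        push_cast
        linarith
    rw [this]
    simp
  refine ⟨hidx, ?_, by rw [harg]; linarith, by rw [harg]; linarith⟩
  unfold projDist bisAngle
  rw [hidx, hv, mul_assoc, ← Complex.exp_add]
  have : ((j * (π / 3) : ℝ) : ℂ) * Complex.I +
      -(Complex.I * ((((j + 1 : ℕ) : ℝ) - 1) * (π / 3) + π / 6 : ℝ)) =
      ((-(π / 6) : ℝ) : ℂ) * Complex.I := by
    push_cast
    ring
  rw [this, hexPt, add_mul, mul_assoc, ← Complex.exp_add]
  have h2 : ((π / 3 : ℝ) : ℂ) * Complex.I + ((-(π / 6) : ℝ) : ℂ) * Complex.I =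
      ((π / 6 : ℝ) : ℂ) * Complex.I := by
    push_cast
    ring
  rw [h2, Complex.add_re, Complex.re_ofReal_mul, Complex.re_ofReal_mul,
    Complex.exp_ofReal_mul_I_re, Complex.exp_ofReal_mul_I_re, Real.cos_neg, cos_pi_div_six]
  ring

lemma exp_mul_pi_div_three (j : ℕ) :
    Complex.exp ((j * (π / 3) : ℝ) * Complex.I) =
      (1 / 2 + (√3 / 2 : ℝ) * Complex.I) ^ j := by
  rw [← exp_pi_div_three, ← Complex.exp_nat_mul]
  push_cast
  ring_nf

/-- The six possibilities for a vector off the six rays: its sign pattern, the inequalities that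
define the open cone, and its hexagonal norm. -/
lemma sector {X Y : ℝ} (hX : X ≠ 0) (hY : Y ≠ 0) (hZ : X + Y ≠ 0) :
    (signs X Y = (true, true, false) ∧ 0 < X ∧ 0 < Y ∧ hexNorm X Y = X + Y) ∨
    (signs X Y = (false, true, false) ∧ X < 0 ∧ 0 < X + Y ∧ hexNorm X Y = Y) ∨
    (signs X Y = (false, true, true) ∧ 0 < Y ∧ X + Y < 0 ∧ hexNorm X Y = -X) ∨
    (signs X Y = (false, false, true) ∧ X < 0 ∧ Y < 0 ∧ hexNorm X Y = -X - Y) ∨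
    (signs X Y = (true, false, true) ∧ 0 < X ∧ X + Y < 0 ∧ hexNorm X Y = -Y) ∨
    (signs X Y = (true, false, false) ∧ Y < 0 ∧ 0 < X + Y ∧ hexNorm X Y = X) := by
  unfold signs hexNorm
  rcases lt_or_gt_of_ne hX with h1 | h1 <;> rcases lt_or_gt_of_ne hY with h2 | h2 <;>
    rcases lt_or_gt_of_ne hZ with h3 | h3 <;> first
    | linarith
    | (simp only [abs_of_neg, abs_of_pos, h1, h2, h3, Prod.mk.injEq, decide_eq_true_eq,
        decide_eq_false_iff_not, not_lt]
       grind)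

lemma cone_hex {u v : ℂ} {X Y : ℝ} (hX : X ≠ 0) (hY : Y ≠ 0) (hZ : X + Y ≠ 0)
    (hv : v - u = hexPt X Y) :
    coneIdx u v = patIdx (signs X Y) ∧ projDist u v = √3 / 2 * hexNorm X Y ∧
      ∃ j : ℕ, (j : ℝ) * (π / 3) < argIn (v - u) ∧ argIn (v - u) < ((j : ℝ) + 1) * (π / 3) := by
  have h3 : ((√3 : ℝ) : ℂ) ^ 2 = 3 := by
    rw [← Complex.ofReal_pow, Real.sq_sqrt (by norm_num)]
    norm_num
  have key : ∀ (j : ℕ) (s t : ℝ), j < 6 → 0 < s → 0 < t →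
      hexPt X Y = hexPt s t * (1 / 2 + (√3 / 2 : ℝ) * Complex.I) ^ j →
      coneIdx u v = j + 1 ∧ projDist u v = √3 / 2 * (s + t) ∧
      (j : ℝ) * (π / 3) < argIn (v - u) ∧ argIn (v - u) < ((j : ℝ) + 1) * (π / 3) := by
    intro j s t hj hs ht h
    exact cone_data hs ht j hj u v (by rw [hv, h, exp_mul_pi_div_three])
  -- The sixth root of unity satisfies `q ^ 2 = q - 1`.
  have hq : ((1 : ℂ) / 2 + (√3 / 2 : ℝ) * Complex.I) ^ 2 =
      (1 / 2 + (√3 / 2 : ℝ) * Complex.I) - 1 := by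
    push_cast
    linear_combination (Complex.I ^ 2 / 4) * h3 + (3 / 4) * Complex.I_sq
  simp only [hexPt, exp_pi_div_three] at key
  generalize ((1 : ℂ) / 2 + (√3 / 2 : ℝ) * Complex.I) = q at key hq
  rcases sector hX hY hZ with ⟨hs, a, b, hn⟩ | ⟨hs, a, b, hn⟩ | ⟨hs, a, b, hn⟩ |
    ⟨hs, a, b, hn⟩ | ⟨hs, a, b, hn⟩ | ⟨hs, a, b, hn⟩ <;> rw [hs, hn]
  · obtain ⟨k1, k2, k3⟩ := key 0 X Y (by norm_num) a b (by ring)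
    exact ⟨k1, k2, _, k3⟩
  · obtain ⟨k1, k2, k3⟩ := key 1 (X + Y) (-X) (by norm_num) b (by linarith)
      (by push_cast; linear_combination X * hq)
    exact ⟨k1, by rw [k2]; ring, _, k3⟩
  · obtain ⟨k1, k2, k3⟩ := key 2 Y (-X - Y) (by norm_num) a (by linarith)
      (by push_cast; linear_combination (-Y + (X + Y) * (q + 1)) * hq)
    exact ⟨k1, by rw [k2]; ring, _, k3⟩
  · obtain ⟨k1, k2, k3⟩ := key 3 (-X) (-Y) (by norm_num) (by linarith) (by linarith)
      (by push_cast; linear_combination (X + Y * q) * (q + 1) * hq)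
    exact ⟨k1, by rw [k2]; ring, _, k3⟩
  · obtain ⟨k1, k2, k3⟩ := key 4 (-X - Y) X (by norm_num) (by linarith) (by linarith)
      (by push_cast; linear_combination ((X + Y - X * q) * (q ^ 2 + q) + X) * hq)
    exact ⟨k1, by rw [k2]; ring, _, k3⟩
  · obtain ⟨k1, k2, k3⟩ := key 5 (-Y) (X + Y) (by norm_num) (by linarith) (by linarith)
      (by push_cast; linear_combination ((Y - (X + Y) * q) * (q ^ 3 + q ^ 2 - 1) + X + Y) * hq)
    exact ⟨k1, by rw [k2]; ring, _, k3⟩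

/-! ### Edges in terms of sign patterns -/

/-- Given the sign patterns `c`, `d`, `e` of `v - u`, `w - u` and `v - w`, decides whether `w`
lies in the same cone of `u` as `v` and strictly before `v`. Inside a cone the projective distance
is proportional to the coordinate whose sign differs from the two others, so it suffices that `e`
agrees with `c` there. -/
def before (c d e : Bool × Bool × Bool) : Bool :=
  c == d && (if c.2.1 == c.2.2 then e.1 == c.1
    else if c.1 == c.2.2 then e.2.1 == c.2.1 else e.2.2 == c.2.2)

lemma before_iff {X Y X' Y' : ℝ} (hX : X ≠ 0) (hY : Y ≠ 0) (hZ : X + Y ≠ 0)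
    (hX' : X' ≠ 0) (hY' : Y' ≠ 0) (hZ' : X' + Y' ≠ 0)
    (dX : X - X' ≠ 0) (dY : Y - Y' ≠ 0) (dZ : X - X' + (Y - Y') ≠ 0) :
    before (signs X Y) (signs X' Y') (signs (X - X') (Y - Y')) = true ↔
      signs X Y = signs X' Y' ∧ hexNorm X' Y' < hexNorm X Y := by
  by_cases hc : signs X Y = signs X' Y'
  swap
  · simp [before, hc]
  rcases sector hX hY hZ with ⟨hs, a, b, hn⟩ | ⟨hs, a, b, hn⟩ | ⟨hs, a, b, hn⟩ |
    ⟨hs, a, b, hn⟩ | ⟨hs, a, b, hn⟩ | ⟨hs, a, b, hn⟩ <;>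
  rcases sector hX' hY' hZ' with ⟨hs', a', b', hn'⟩ | ⟨hs', a', b', hn'⟩ | ⟨hs', a', b', hn'⟩ |
    ⟨hs', a', b', hn'⟩ | ⟨hs', a', b', hn'⟩ | ⟨hs', a', b', hn'⟩ <;>
  first
  | (exfalso; rw [hs, hs'] at hc; revert hc; decide)
  | (rw [hs, hs', hn, hn']
     simp only [before, signs]
     simp <;> constructor <;> intro h <;> first
      | linarith
      | (rcases lt_or_gt_of_ne dX with g | g <;> linarith)
      | (rcases lt_or_gt_of_ne dY with g | g <;> linarith)
      | (rcases lt_or_gt_of_ne dZ with g | g <;> linarith))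

lemma patIdx_inj {X Y X' Y' : ℝ} (hX : X ≠ 0) (hY : Y ≠ 0) (hZ : X + Y ≠ 0)
    (hX' : X' ≠ 0) (hY' : Y' ≠ 0) (hZ' : X' + Y' ≠ 0) :
    patIdx (signs X Y) = patIdx (signs X' Y') ↔ signs X Y = signs X' Y' := by
  refine ⟨fun h => ?_, fun h => by rw [h]⟩
  rcases sector hX hY hZ with ⟨hs, -⟩ | ⟨hs, -⟩ | ⟨hs, -⟩ | ⟨hs, -⟩ | ⟨hs, -⟩ | ⟨hs, -⟩ <;>
  rcases sector hX' hY' hZ' with ⟨hs', -⟩ | ⟨hs', -⟩ | ⟨hs', -⟩ | ⟨hs', -⟩ | ⟨hs', -⟩ |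
    ⟨hs', -⟩ <;>
  rw [hs, hs'] at h ⊢ <;> revert h <;> decide

section Family

variable {ι : Type*} (X Y : ι → ℝ)

/-- No two points of the family agree in one of the three coordinates. -/
def Generic : Prop :=
  ∀ i j, i ≠ j → X j - X i ≠ 0 ∧ Y j - Y i ≠ 0 ∧ X j - X i + (Y j - Y i) ≠ 0

/-- The point with index `i` of a family given by its coordinates. -/
def famPt (i : ι) : ℂ := hexPt (X i) (Y i)

/-- Sign pattern of the vector from the `i`-th to the `j`-th point. -/
def pat (i j : ι) : Bool × Bool × Bool := signs (X j - X i) (Y j - Y i)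

/-- Hexagonal distance between two points of the family. -/
def hexDist (i j : ι) : ℝ := hexNorm (X j - X i) (Y j - Y i)

/-- `w` lies in the same cone of `u` as `v`, strictly before `v`. -/
def Before (u v w : ι) : Prop := before (pat X Y u v) (pat X Y u w) (pat X Y w v) = true

variable {X Y}

lemma famPt_sub (i j : ι) : famPt X Y j - famPt X Y i = hexPt (X j - X i) (Y j - Y i) := by
  simp only [famPt, hexPt]
  push_cast
  ring

lemma hexDist_comm (i j : ι) : hexDist X Y i j = hexDist X Y j i := by
  unfold hexDist hexNorm
  rw [abs_sub_comm (X j), abs_sub_comm (Y j), ← abs_neg (X j - X i + (Y j - Y i))]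
  ring_nf

lemma Generic.cone_hex (h : Generic X Y) {i j : ι} (hij : i ≠ j) :
    coneIdx (famPt X Y i) (famPt X Y j) = patIdx (pat X Y i j) ∧
      projDist (famPt X Y i) (famPt X Y j) = √3 / 2 * hexDist X Y i j ∧
      ∃ k : ℕ, (k : ℝ) * (π / 3) < argIn (famPt X Y j - famPt X Y i) ∧
        argIn (famPt X Y j - famPt X Y i) < ((k : ℝ) + 1) * (π / 3) := by
  obtain ⟨a, b, c⟩ := h i j hij
  exact _root_.cone_hex a b c (famPt_sub i j)

lemma Generic.injective (h : Generic X Y) : Function.Injective (famPt X Y) := by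
  intro i j hij
  by_contra hne
  obtain ⟨-, -, k, h1, h2⟩ := h.cone_hex hne
  rw [← hij, sub_self] at h1 h2
  simp [argIn] at h1 h2
  have : (0 : ℝ) ≤ k * (π / 3) := by positivity
  linarith

lemma Generic.genPos (h : Generic X Y) {S : Finset ℂ}
    (hS : ∀ z ∈ S, ∃ i, z = famPt X Y i) : GenPos S := by
  intro u hu v hv huv j hj
  obtain ⟨i, rfl⟩ := hS u hu
  obtain ⟨k, rfl⟩ := hS v hv
  obtain ⟨-, -, m, h1, h2⟩ := h.cone_hex (i := i) (j := k) (fun e => huv (by rw [e]))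
  rw [hj] at h1 h2
  have hp : 0 < π / 3 := by positivity
  have h1' := lt_of_mul_lt_mul_right h1 hp.le
  have h2' := lt_of_mul_lt_mul_right h2 hp.le
  have h3 : m < j := by exact_mod_cast h1'
  have h4 : j < m + 1 := by exact_mod_cast h2'
  omega

lemma Generic.before_iff (h : Generic X Y) {u v w : ι} (huv : u ≠ v) (huw : u ≠ w) (hwv : w ≠ v) :
    Before X Y u v w ↔ pat X Y u v = pat X Y u w ∧ hexDist X Y u w < hexDist X Y u v := by
  obtain ⟨a, b, c⟩ := h u v huv
  obtain ⟨a', b', c'⟩ := h u w huw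
  obtain ⟨a'', b'', c''⟩ := h w v hwv
  have := _root_.before_iff a b c a' b' c' (by convert a'' using 1; ring) (by convert b'' using 1; ring)
    (by convert c'' using 1; ring)
  rw [show X v - X u - (X w - X u) = X v - X w by ring,
    show Y v - Y u - (Y w - Y u) = Y v - Y w by ring] at this
  exact this

lemma Generic.coneIdx_eq_iff (h : Generic X Y) {u v w : ι} (huv : u ≠ v) (huw : u ≠ w) :
    coneIdx (famPt X Y u) (famPt X Y w) = coneIdx (famPt X Y u) (famPt X Y v) ↔
      pat X Y u v = pat X Y u w := by
  rw [(h.cone_hex huv).1, (h.cone_hex huw).1, eq_comm]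
  obtain ⟨a, b, c⟩ := h u v huv
  obtain ⟨a', b', c'⟩ := h u w huw
  exact patIdx_inj a b c a' b' c'

lemma Generic.mem_cone (h : Generic X Y) {u w : ι} (huw : u ≠ w) :
    famPt X Y w ∈ cone (coneIdx (famPt X Y u) (famPt X Y w)) (famPt X Y u) := by
  refine ⟨fun e => huw (h.injective e).symm, ?_⟩
  have hp : 0 < π / 3 := by positivity
  have h0 : 0 ≤ argIn (famPt X Y w - famPt X Y u) / (π / 3) := by
    apply div_nonneg _ hp.le
    unfold argIn
    split_ifs with h1
    · exact h1
    · linarith [Complex.neg_pi_lt_arg (famPt X Y w - famPt X Y u), pi_pos]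
  unfold coneIdx
  set q := argIn (famPt X Y w - famPt X Y u) / (π / 3) with hq
  have h1 : ((⌊q⌋.toNat : ℕ) : ℝ) = (⌊q⌋ : ℝ) := by
    have := Int.toNat_of_nonneg (Int.floor_nonneg.mpr h0)
    exact_mod_cast this
  have h2 : argIn (famPt X Y w - famPt X Y u) = q * (π / 3) := by
    rw [hq]
    field_simp
  rw [h2]
  push_cast
  rw [h1]
  constructor
  · gcongr
    linarith [Int.floor_le q]
  · gcongr
    exact Int.lt_floor_add_one q

lemma Generic.eq_of_mem_cone (h : Generic X Y) {u v w : ι} (huv : u ≠ v)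
    (hw : famPt X Y w ∈ cone (coneIdx (famPt X Y u) (famPt X Y v)) (famPt X Y u)) :
    u ≠ w ∧ pat X Y u v = pat X Y u w := by
  have huw : u ≠ w := fun e => hw.1 (by rw [e])
  refine ⟨huw, (h.coneIdx_eq_iff huv huw).1 ?_⟩
  have h1 := hw.2
  have h2 := (h.mem_cone huw).2
  have hp : 0 < π / 3 := by positivity
  have a := lt_of_mul_lt_mul_right (h1.1.trans_lt h2.2) hp.le
  have b := lt_of_mul_lt_mul_right (h2.1.trans_lt h1.2) hp.le
  have a' : coneIdx (famPt X Y u) (famPt X Y v) < coneIdx (famPt X Y u) (famPt X Y w) + 1 := by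
    have : (coneIdx (famPt X Y u) (famPt X Y v) : ℝ) <
      coneIdx (famPt X Y u) (famPt X Y w) + 1 := by linarith
    exact_mod_cast this
  have b' : coneIdx (famPt X Y u) (famPt X Y w) < coneIdx (famPt X Y u) (famPt X Y v) + 1 := by
    have : (coneIdx (famPt X Y u) (famPt X Y w) : ℝ) <
      coneIdx (famPt X Y u) (famPt X Y v) + 1 := by linarith
    exact_mod_cast this
  omega

lemma Generic.projDist_lt (h : Generic X Y) {u v w : ι} (huv : u ≠ v) (huw : u ≠ w)
    (hlt : hexDist X Y u w < hexDist X Y u v) :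
    projDist (famPt X Y u) (famPt X Y w) < projDist (famPt X Y u) (famPt X Y v) := by
  rw [(h.cone_hex huv).2.1, (h.cone_hex huw).2.1]
  gcongr

/-- A point strictly before `v` in its cone destroys the edge `u → v` of `Θ₆`. -/
lemma Generic.not_thetaEdge (h : Generic X Y) {S : Finset ℂ} {u v w : ι} (huv : u ≠ v)
    (huw : u ≠ w) (hwv : w ≠ v) (hw : famPt X Y w ∈ S) (hb : Before X Y u v w) :
    ¬ ThetaEdge S (famPt X Y u) (famPt X Y v) := by
  rintro ⟨-, -, -, hmin⟩
  obtain ⟨h1, h2⟩ := (h.before_iff huv huw hwv).1 hb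
  have h3 := hmin _ hw (by
    rw [← (h.coneIdx_eq_iff huv huw).2 h1]
    exact h.mem_cone huw)
  exact absurd h3 (not_le.mpr (h.projDist_lt huv huw h2))

/-- A shorter `Θ₆`-edge `w → v` in the same cone of `v` destroys the edge `u → v` of `ΘΘ₆`. -/
lemma Generic.not_thetaThetaEdge (h : Generic X Y) {S : Finset ℂ} {u v w : ι} (huv : u ≠ v)
    (huw : u ≠ w) (hwv : w ≠ v) (hw : ThetaEdge S (famPt X Y w) (famPt X Y v))
    (hb : Before X Y v u w) : ¬ ThetaThetaEdge S (famPt X Y u) (famPt X Y v) := by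
  rintro ⟨-, hmin⟩
  obtain ⟨h1, h2⟩ := (h.before_iff huv.symm hwv.symm huw.symm).1 hb
  have h3 := hmin _ hw ((h.coneIdx_eq_iff huv.symm hwv.symm).2 h1)
  rw [(h.cone_hex huv).2.1, (h.cone_hex hwv).2.1, hexDist_comm u v, hexDist_comm w v] at h3
  have h4 : 0 < √3 / 2 := by positivity
  exact absurd (le_of_mul_le_mul_left h3 h4) (not_le.mpr h2)

lemma Generic.thetaEdge (h : Generic X Y) {S : Finset ℂ} {u v : ι} (huv : u ≠ v)
    (hS : ∀ z ∈ S, ∃ i, z = famPt X Y i) (hu : famPt X Y u ∈ S) (hv : famPt X Y v ∈ S)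
    (hno : ∀ w, u ≠ w → w ≠ v → famPt X Y w ∈ S → hexDist X Y u w < hexDist X Y u v →
      ¬ Before X Y u v w) :
    ThetaEdge S (famPt X Y u) (famPt X Y v) := by
  refine ⟨hu, hv, fun e => huv (h.injective e).symm, fun z hz hc => ?_⟩
  obtain ⟨w, rfl⟩ := hS z hz
  obtain ⟨huw, hp⟩ := h.eq_of_mem_cone huv hc
  by_contra hlt
  push Not at hlt
  rw [(h.cone_hex huv).2.1, (h.cone_hex huw).2.1] at hlt
  have h4 : 0 ≤ √3 / 2 := by positivity
  have hd := lt_of_mul_lt_mul_left hlt h4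
  have hwv : w ≠ v := by
    rintro rfl
    exact lt_irrefl _ hd
  exact hno w huw hwv hz hd ((h.before_iff huv huw hwv).2 ⟨hp, hd⟩)

lemma dist_famPt (i j : ι) :
    dist (famPt X Y i) (famPt X Y j) ^ 2 =
      (3 * (X i + Y i - (X j + Y j)) ^ 2 + (X i - Y i - (X j - Y j)) ^ 2) / 4 := by
  have h3 : √3 ^ 2 = 3 := Real.sq_sqrt (by norm_num)
  rw [dist_comm, Complex.dist_eq, famPt_sub, Complex.sq_norm, Complex.normSq_apply, hexPt,
    exp_pi_div_three]
  simp
  linear_combination ((Y j - Y i) ^ 2 / 4) * h3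

end Family

/-! ### The two-armed spiral -/

/-- Twice the unperturbed horizontal offset of the four classes: three pivots and one outer
point. -/
def baseW : Fin 4 → ℤ := ![-1, -1, -1, 3]

/-- Horizontal perturbation of the four classes. -/
def pertW : Fin 4 → ℤ := ![1, 6, 1, -11]

/-- Vertical perturbation of the four classes. -/
def pertZ : Fin 4 → ℤ := ![5, 6, 3, 7]

/-- The perturbation scale at level `k`. -/
def scale (η : ℝ) (k : ℕ) : ℝ := η / 4 ^ k

/-- The coordinate `X - Y` of the point `i = (level, class)`. Consecutive levels are mirror images
of each other. -/
def cW (η : ℝ) (i : ℕ × Fin 4) : ℝ :=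
  (-1) ^ i.1 * (baseW i.2 / 2 + scale η i.1 * pertW i.2)

/-- The coordinate `-X - Y` of the point `i = (level, class)`, roughly the level. -/
def cZ (η : ℝ) (i : ℕ × Fin 4) : ℝ := i.1 + scale η i.1 * pertZ i.2

/-- First coordinate of a point in the basis `1, e^{iπ/3}`. -/
def cX (η : ℝ) (i : ℕ × Fin 4) : ℝ := (cW η i - cZ η i) / 2

/-- Second coordinate of a point in the basis `1, e^{iπ/3}`. -/
def cY (η : ℝ) (i : ℕ × Fin 4) : ℝ := (-cW η i - cZ η i) / 2

/-! ### Integer model of four consecutive levels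

On the levels `K, …, K + 3` every coordinate, multiplied by four and shifted by a constant, has the
form `A + B·T` with integers `A`, `B` and `T = scale η (K + 3)` so small that such numbers compare
lexicographically. All local comparisons are therefore finite computations, one for each parity of
`K`. -/

/-- Model of `2 * cW`; the flag says whether the base level of the window is odd. -/
def mW (σ : Bool) (i : ℕ × Fin 4) : ℤ × ℤ :=
  ((if σ then -1 else 1) * (-1) ^ i.1 * baseW i.2,
    (if σ then -1 else 1) * (-1) ^ i.1 * (2 * 4 ^ (3 - i.1) * pertW i.2))

/-- Model of `2 * cZ`. -/
def mZ (i : ℕ × Fin 4) : ℤ × ℤ := (2 * i.1, 2 * 4 ^ (3 - i.1) * pertZ i.2)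

/-- Model of `4 * cX`. -/
def mX (σ : Bool) (i : ℕ × Fin 4) : ℤ × ℤ := ((mW σ i).1 - (mZ i).1, (mW σ i).2 - (mZ i).2)

/-- Model of `4 * cY`. -/
def mY (σ : Bool) (i : ℕ × Fin 4) : ℤ × ℤ := (-(mW σ i).1 - (mZ i).1, -(mW σ i).2 - (mZ i).2)

/-- Lexicographic comparison of integer pairs. -/
def lexLt (a b : ℤ × ℤ) : Bool := decide (a.1 < b.1) || (decide (a.1 = b.1) && decide (a.2 < b.2))

/-- Sign pattern of a difference in the integer model. -/
def mPat (σ : Bool) (i j : ℕ × Fin 4) : Bool × Bool × Bool :=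
  (lexLt (mX σ i) (mX σ j), lexLt (mY σ i) (mY σ j), lexLt (mZ i) (mZ j))

/-- `Before` in the integer model. -/
def mBefore (σ : Bool) (u v w : ℕ × Fin 4) : Bool :=
  before (mPat σ u v) (mPat σ u w) (mPat σ w v)

/-- Three families of edges of `Θ₆`, the only ones needed to discard incoming edges. -/
def keyEdge (w v : ℕ × Fin 4) : Bool :=
  (w.2 == 3 && v.2 == 2 && v.1 == w.1 + 1) || (w.2 == 0 && v.2 == 3 && v.1 == w.1 + 1) ||
    (w.2 == 1 && v.2 == 0 && v.1 == w.1)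

/-- Pairs that are not edges of `ΘΘ₆`, with the exception that a pivot and the outer point of the
lowest level may be joined: the two types on one level, equal types on consecutive levels, and
any points two or more levels apart. -/
def badPair (u v : ℕ × Fin 4) : Bool :=
  if u.1 = v.1 then ((u.2 == 3) != (v.2 == 3))
  else if u.1 = v.1 + 1 ∨ v.1 = u.1 + 1 then ((u.2 == 3) == (v.2 == 3)) else true

set_option maxRecDepth 100000 in
lemma model_distinct : ∀ σ : Bool, ∀ j j' : Fin 4, ∀ c c' : Fin 4, (j, c) ≠ (j', c') →
    mX σ (j, c) ≠ mX σ (j', c') ∧ mY σ (j, c) ≠ mY σ (j', c') ∧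
      mZ (j, c) ≠ mZ (j', c') := by
  decide +kernel

set_option maxRecDepth 100000 in
/-- No point on the neighbouring levels comes before the target of a key edge. -/
lemma model_keyEdge : ∀ σ : Bool, ∀ c : Fin 4, ∀ v : Fin 4 × Fin 4, ∀ w : Fin 4 × Fin 4,
    w.1.val ≤ 2 → keyEdge (1, c) (v.1, v.2) = true →
      (w.1.val, w.2) ≠ (1, c) → w ≠ v →
      mBefore σ (1, c) (v.1, v.2) (w.1, w.2) = false := by
  decide +kernel

set_option maxRecDepth 100000 in
/-- Every bad pair is destroyed by a point between its levels (or on the level below, if both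
points are on the same level). -/
lemma model_badPair : ∀ σ : Bool, ∀ u v : Fin 4 × Fin 4,
    ((u.1 ≠ v.1 ∧ (u.1 = 0 ∨ v.1 = 0)) ∨ (u.1 = 1 ∧ v.1 = 1)) →
    badPair (u.1, u.2) (v.1, v.2) = true →
    ∃ w : Fin 4 × Fin 4, (w.1 ≤ u.1 ∨ w.1 ≤ v.1) ∧ w ≠ u ∧ w ≠ v ∧
      (mBefore σ (u.1, u.2) (v.1, v.2) (w.1, w.2) = true ∨
        (keyEdge (w.1, w.2) (v.1, v.2) = true ∧
          mBefore σ (v.1, v.2) (u.1, u.2) (w.1, w.2) = true)) := by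
  decide +kernel

/-! ### Transfer from the model to the points -/

lemma lexLt_iff {a b : ℤ × ℤ} {T : ℝ} (hT : 0 < T) (hT' : T ≤ 1 / 10 ^ 6)
    (ha : |a.2| ≤ 10 ^ 4) (hb : |b.2| ≤ 10 ^ 4) :
    lexLt a b = true ↔ (a.1 : ℝ) + a.2 * T < b.1 + b.2 * T := by
  have ha' : |(a.2 : ℝ)| ≤ 10 ^ 4 := by exact_mod_cast ha
  have hb' : |(b.2 : ℝ)| ≤ 10 ^ 4 := by exact_mod_cast hb
  rw [abs_le] at ha' hb'
  have hab : ((b.2 : ℝ) - a.2) * T < 1 ∧ -1 < ((b.2 : ℝ) - a.2) * T := by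
    constructor <;> nlinarith
  simp only [lexLt, Bool.or_eq_true, Bool.and_eq_true, decide_eq_true_eq]
  constructor
  · rintro (h | ⟨h, h'⟩)
    · have : (a.1 : ℝ) + 1 ≤ b.1 := by exact_mod_cast h
      linarith
    · have : (a.2 : ℝ) < b.2 := by exact_mod_cast h'
      rw [h]
      nlinarith
  · intro h
    rcases lt_trichotomy a.1 b.1 with h1 | h1 | h1
    · exact Or.inl h1
    · refine Or.inr ⟨h1, ?_⟩
      rw [h1] at h
      have : (a.2 : ℝ) < b.2 := by
        by_contra hcon
        push Not at hcon
        nlinarith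
      exact_mod_cast this
    · have : (b.1 : ℝ) + 1 ≤ a.1 := by exact_mod_cast h1
      linarith

lemma model_bound : ∀ σ : Bool, ∀ j c : Fin 4, |(mX σ (j, c)).2| ≤ 10 ^ 4 ∧
    |(mY σ (j, c)).2| ≤ 10 ^ 4 ∧ |(mZ (j, c)).2| ≤ 10 ^ 4 := by
  decide +kernel

section Points

variable {η : ℝ}

lemma scale_window (η : ℝ) (K : ℕ) (j : Fin 4) :
    scale η (K + j) = 4 ^ (3 - (j : ℕ)) * scale η (K + 3) := by
  unfold scale
  fin_cases j <;> simp [pow_add] <;> field_simp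

lemma scale_pos (hη : 0 < η) (k : ℕ) : 0 < scale η k := by
  unfold scale
  positivity

lemma scale_le (hη : 0 < η) (k : ℕ) : scale η k ≤ η := by
  unfold scale
  apply div_le_self hη.le
  exact one_le_pow₀ (by norm_num)

lemma neg_one_pow_parity (K : ℕ) :
    (-1 : ℝ) ^ K = (((if decide (Odd K) then -1 else 1 : ℤ)) : ℝ) := by
  by_cases h : Odd K
  · simp [h, h.neg_one_pow]
  · simp [h, (Nat.not_odd_iff_even.1 h).neg_one_pow]

lemma cW_window (K : ℕ) (j c : Fin 4) :
    2 * cW η (K + j, c) = (mW (decide (Odd K)) (j, c)).1 +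
      (mW (decide (Odd K)) (j, c)).2 * scale η (K + 3) := by
  simp only [cW, mW, scale_window, pow_add, neg_one_pow_parity K]
  push_cast
  ring

lemma cZ_window (K : ℕ) (j c : Fin 4) :
    2 * cZ η (K + j, c) = 2 * K + ((mZ (j, c)).1 + (mZ (j, c)).2 * scale η (K + 3)) := by
  simp only [cZ, mZ, scale_window]
  push_cast
  ring

lemma cX_window (K : ℕ) (j c : Fin 4) :
    4 * cX η (K + j, c) = -2 * K + ((mX (decide (Odd K)) (j, c)).1 +
      (mX (decide (Odd K)) (j, c)).2 * scale η (K + 3)) := by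
  simp only [mX]
  push_cast
  unfold cX
  linear_combination cW_window (η := η) K j c - cZ_window (η := η) K j c

lemma cY_window (K : ℕ) (j c : Fin 4) :
    4 * cY η (K + j, c) = -2 * K + ((mY (decide (Odd K)) (j, c)).1 +
      (mY (decide (Odd K)) (j, c)).2 * scale η (K + 3)) := by
  simp only [mY]
  push_cast
  unfold cY
  linear_combination -cW_window (η := η) K j c - cZ_window (η := η) K j c

lemma cZ_eq (i : ℕ × Fin 4) : cZ η i = -(cX η i) - cY η i := by
  unfold cX cY
  ring

lemma cW_eq (i : ℕ × Fin 4) : cW η i = cX η i - cY η i := by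
  unfold cX cY
  ring

lemma pat_window (hη : 0 < η) (hη' : η ≤ 1 / 10 ^ 6) (K : ℕ) (i j c d : Fin 4) :
    pat (cX η) (cY η) (K + i, c) (K + j, d) = mPat (decide (Odd K)) (i, c) (j, d) := by
  have hT := scale_pos hη (K + 3)
  have hT' := (scale_le hη (K + 3)).trans hη'
  obtain ⟨a1, a2, a3⟩ := model_bound (decide (Odd K)) i c
  obtain ⟨b1, b2, b3⟩ := model_bound (decide (Odd K)) j d
  have e1 := lexLt_iff hT hT' a1 b1
  have e2 := lexLt_iff hT hT' a2 b2
  have e3 := lexLt_iff hT hT' a3 b3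
  have f1 := cX_window (η := η) K i c
  have f2 := cX_window (η := η) K j d
  have g1 := cY_window (η := η) K i c
  have g2 := cY_window (η := η) K j d
  have k1 := cZ_window (η := η) K i c
  have k2 := cZ_window (η := η) K j d
  rw [cZ_eq] at k1 k2
  unfold pat signs mPat
  refine Prod.ext ?_ (Prod.ext ?_ ?_)
  · rw [Bool.eq_iff_iff, e1, decide_eq_true_eq]
    constructor <;> intro h <;> linarith
  · rw [Bool.eq_iff_iff, e2, decide_eq_true_eq]
    constructor <;> intro h <;> linarith
  · rw [Bool.eq_iff_iff, e3, decide_eq_true_eq]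
    constructor <;> intro h <;> linarith

lemma before_window (hη : 0 < η) (hη' : η ≤ 1 / 10 ^ 6) (K : ℕ) (i j k c d e : Fin 4) :
    Before (cX η) (cY η) (K + i, c) (K + j, d) (K + k, e) ↔
      mBefore (decide (Odd K)) (i, c) (j, d) (k, e) = true := by
  unfold Before mBefore
  rw [pat_window hη hη', pat_window hη hη', pat_window hη hη']

lemma cW_near (hη : 0 < η) (i : ℕ × Fin 4) :
    |cW η i - (-1) ^ i.1 * (baseW i.2 / 2)| ≤ 11 * η := by
  have h1 := scale_pos hη i.1
  have h2 := scale_le hη i.1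
  obtain ⟨k, c⟩ := i
  have h3 : |(pertW c : ℝ)| ≤ 11 := by
    have : ∀ c, |pertW c| ≤ 11 := by decide
    exact_mod_cast this c
  have : cW η (k, c) - (-1) ^ k * (baseW c / 2) = (-1) ^ k * (scale η k * pertW c) := by
    unfold cW
    ring
  simp only [this, abs_mul, abs_pow, abs_neg, abs_one, one_pow, one_mul, abs_of_pos h1]
  simp only at h1 h2
  nlinarith

lemma cZ_near (hη : 0 < η) (i : ℕ × Fin 4) : |cZ η i - i.1| ≤ 7 * η := by
  have h1 := scale_pos hη i.1
  have h2 := scale_le hη i.1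
  obtain ⟨k, c⟩ := i
  have h3 : |(pertZ c : ℝ)| ≤ 7 := by
    have : ∀ c, |pertZ c| ≤ 7 := by decide
    exact_mod_cast this c
  have : cZ η (k, c) - k = scale η k * pertZ c := by
    unfold cZ
    ring
  simp only [this, abs_mul, abs_of_pos h1]
  simp only at h1 h2
  nlinarith

lemma cW_le (hη : 0 < η) (hη' : η ≤ 1 / 10 ^ 6) (i : ℕ × Fin 4) : |cW η i| ≤ 1.6 := by
  have h := cW_near hη i
  have h2 : |(-1 : ℝ) ^ i.1 * (baseW i.2 / 2)| ≤ 3 / 2 := by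
    have h3 : |(baseW i.2 : ℝ)| ≤ 3 := by
      have : ∀ c, |baseW c| ≤ 3 := by decide
      exact_mod_cast this i.2
    rw [abs_mul, abs_pow, abs_neg, abs_one, one_pow, one_mul, abs_div, abs_two]
    linarith
  rw [abs_le] at h h2 ⊢
  norm_num at hη'
  constructor <;> norm_num <;> linarith

/-- Every point at least four levels higher lies in the cone pointing upwards. -/
lemma far_lt (hη : 0 < η) (hη' : η ≤ 1 / 10 ^ 6) {i j : ℕ × Fin 4} (h : i.1 + 4 ≤ j.1) :
    cX η j < cX η i ∧ cY η j < cY η i ∧ cZ η i < cZ η j := by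
  have h1 := abs_le.1 (cW_le hη hη' i)
  have h2 := abs_le.1 (cW_le hη hη' j)
  have h3 := abs_le.1 (cZ_near hη i)
  have h4 := abs_le.1 (cZ_near hη j)
  have h5 : (i.1 : ℝ) + 4 ≤ j.1 := by exact_mod_cast h
  norm_num at hη' h1 h2
  unfold cX cY
  refine ⟨?_, ?_, ?_⟩ <;> linarith

/-- The point of the same class two levels higher lies in the cone pointing upwards. -/
lemma two_lt (hη : 0 < η) (hη' : η ≤ 1 / 10 ^ 6) (k : ℕ) (c : Fin 4) :
    cX η (k + 2, c) < cX η (k, c) ∧ cY η (k + 2, c) < cY η (k, c) ∧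
      cZ η (k, c) < cZ η (k + 2, c) := by
  have h1 := abs_le.1 (cW_near hη (k, c))
  have h2 := abs_le.1 (cW_near hη (k + 2, c))
  have h3 := abs_le.1 (cZ_near hη (k, c))
  have h4 := abs_le.1 (cZ_near hη (k + 2, c))
  have h5 : (-1 : ℝ) ^ (k + 2) = (-1) ^ k := by rw [pow_add]; norm_num
  simp only [h5] at h2
  push_cast at h4
  norm_num at hη'
  unfold cX cY
  refine ⟨?_, ?_, ?_⟩ <;> linarith

lemma exists_window {i j : ℕ} (h : i ≤ j + 3) (h' : j ≤ i + 3) :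
    ∃ (K : ℕ) (a b : Fin 4), i = K + a ∧ j = K + b ∧ (a = 0 ∨ b = 0) := by
  rcases le_total i j with hl | hl
  · exact ⟨i, 0, ⟨j - i, by omega⟩, by simp, by simp; omega, Or.inl rfl⟩
  · exact ⟨j, ⟨i - j, by omega⟩, 0, by simp; omega, by simp, Or.inr rfl⟩

lemma lexLt_total {a b : ℤ × ℤ} (h : a ≠ b) : lexLt a b = true ∨ lexLt b a = true := by
  simp only [lexLt, Bool.or_eq_true, Bool.and_eq_true, decide_eq_true_eq]
  have : ¬ (a.1 = b.1 ∧ a.2 = b.2) := fun e => h (Prod.ext e.1 e.2)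
  omega

lemma generic_points (hη : 0 < η) (hη' : η ≤ 1 / 10 ^ 6) : Generic (cX η) (cY η) := by
  rintro ⟨i, c⟩ ⟨j, d⟩ hij
  by_cases hnear : i ≤ j + 3 ∧ j ≤ i + 3
  · obtain ⟨K, a, b, rfl, rfl, -⟩ := exists_window hnear.1 hnear.2
    have hne : (a, c) ≠ (b, d) := by
      rintro e
      simp only [Prod.mk.injEq] at e
      exact hij (by rw [e.1, e.2])
    obtain ⟨h1, h2, h3⟩ := model_distinct (decide (Odd K)) a b c d hne
    have p1 := pat_window hη hη' K a b c d
    have p2 := pat_window hη hη' K b a d c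
    simp only [pat, signs, mPat, Prod.mk.injEq] at p1 p2
    have k1 := lexLt_total h1
    have k2 := lexLt_total h2
    have k3 := lexLt_total h3
    rw [← p1.1, ← p2.1] at k1
    rw [← p1.2.1, ← p2.2.1] at k2
    rw [← p1.2.2, ← p2.2.2] at k3
    simp only [decide_eq_true_eq] at k1 k2 k3
    refine ⟨?_, ?_, ?_⟩
    · intro h
      rcases k1 with k | k <;> linarith
    · intro h
      rcases k2 with k | k <;> linarith
    · intro h
      rcases k3 with k | k <;> linarith
  · have : j + 4 ≤ i ∨ i + 4 ≤ j := by omega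
    rcases this with h | h
    · obtain ⟨a, b, e⟩ := far_lt hη hη' (i := (j, d)) (j := (i, c)) h
      exact ⟨by linarith, by linarith, by linarith⟩
    · obtain ⟨a, b, e⟩ := far_lt hη hη' (i := (i, c)) (j := (j, d)) h
      exact ⟨by linarith, by linarith, by linarith⟩

/-- Between points at least four levels apart, the point two levels from `u` towards `v` and in the
class of `u` comes before `v`. -/
lemma before_far (hη : 0 < η) (hη' : η ≤ 1 / 10 ^ 6) {u v : ℕ × Fin 4}
    (h : v.1 + 4 ≤ u.1 ∨ u.1 + 4 ≤ v.1) :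
    ∃ w : ℕ × Fin 4, min u.1 v.1 ≤ w.1 ∧ w.1 ≤ max u.1 v.1 ∧ w ≠ u ∧ w ≠ v ∧
      Before (cX η) (cY η) u v w := by
  have sg : ∀ i j : ℕ × Fin 4, cX η j < cX η i ∧ cY η j < cY η i ∧ cZ η i < cZ η j →
      pat (cX η) (cY η) i j = (false, false, true) ∧
      pat (cX η) (cY η) j i = (true, true, false) := by
    rintro i j ⟨a, b, c⟩
    rw [cZ_eq, cZ_eq] at c
    simp only [pat, signs, Prod.mk.injEq, decide_eq_true_eq, decide_eq_false_iff_not, not_lt]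
    refine ⟨⟨?_, ?_, ?_⟩, ⟨?_, ?_, ?_⟩⟩ <;> linarith
  obtain ⟨k, c⟩ := u
  obtain ⟨l, d⟩ := v
  simp only at h
  rcases h with h | h
  · obtain ⟨m, rfl⟩ : ∃ m, k = m + 2 := ⟨k - 2, by omega⟩
    refine ⟨(m, c), by simp; omega, by simp, by simp, ?_, ?_⟩
    · simp only [ne_eq, Prod.mk.injEq, not_and]
      omega
    have hz : cZ η (l, d) < cZ η (m, c) := by
      have h3 := abs_le.1 (cZ_near hη (l, d))
      have h4 := abs_le.1 (cZ_near hη (m, c))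
      have h5 : (l : ℝ) + 2 ≤ m := by
        have : l + 2 ≤ m := by omega
        exact_mod_cast this
      norm_num at hη'
      simp only at h3 h4
      linarith
    rw [cZ_eq, cZ_eq] at hz
    unfold Before
    rw [(sg _ _ (far_lt hη hη' (i := (l, d)) (j := (m + 2, c)) h)).2, (sg _ _ (two_lt hη hη' m c)).2]
    simp only [before, pat, signs]
    simp
    linarith
  · refine ⟨(k + 2, c), by simp, by simp; omega, by simp, ?_, ?_⟩
    · simp only [ne_eq, Prod.mk.injEq, not_and]
      omega
    have hz : cZ η (k + 2, c) < cZ η (l, d) := by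
      have h3 := abs_le.1 (cZ_near hη (l, d))
      have h4 := abs_le.1 (cZ_near hη (k + 2, c))
      have h5 : (k : ℝ) + 2 + 2 ≤ l := by
        have : k + 2 + 2 ≤ l := by omega
        exact_mod_cast this
      norm_num at hη'
      push_cast at h4
      simp only at h3 h4
      linarith
    rw [cZ_eq, cZ_eq] at hz
    unfold Before
    rw [(sg _ _ (far_lt hη hη' (i := (k, c)) (j := (l, d)) h)).1, (sg _ _ (two_lt hη hη' k c)).1]
    simp only [before, pat, signs]
    simp
    linarith

end Points

/-! ### The edges of the graph and the potential -/

section Spiral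

variable {η : ℝ}

/-- The `4 * n` points of the levels `1, …, n`. -/
def spiral (η : ℝ) (n : ℕ) : Finset ℂ :=
  (Finset.Icc 1 n ×ˢ (Finset.univ : Finset (Fin 4))).image (famPt (cX η) (cY η))

lemma mem_spiral {n : ℕ} {i : ℕ × Fin 4} (h1 : 1 ≤ i.1) (h2 : i.1 ≤ n) :
    famPt (cX η) (cY η) i ∈ spiral η n :=
  Finset.mem_image_of_mem _ (by simp [h1, h2])

lemma exists_of_mem_spiral {n : ℕ} {z : ℂ} (hz : z ∈ spiral η n) :
    ∃ i : ℕ × Fin 4, 1 ≤ i.1 ∧ i.1 ≤ n ∧ z = famPt (cX η) (cY η) i := by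
  obtain ⟨i, hi, rfl⟩ := Finset.mem_image.1 hz
  simp at hi
  exact ⟨i, hi.1, hi.2, rfl⟩

lemma abs_cZ_le_hexDist (i j : ℕ × Fin 4) :
    |cZ η i - cZ η j| ≤ hexDist (cX η) (cY η) i j := by
  unfold hexDist hexNorm
  rw [cZ_eq, cZ_eq, show -cX η i - cY η i - (-cX η j - cY η j) =
    cX η j - cX η i + (cY η j - cY η i) by ring]
  exact (le_max_right _ _).trans (le_max_right _ _)

lemma hexDist_keyEdge (hη : 0 < η) (hη' : η ≤ 1 / 10 ^ 6) {w v : ℕ × Fin 4}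
    (h : keyEdge w v = true) : hexDist (cX η) (cY η) w v < 1.9 := by
  have h1 := abs_le.1 (cW_near hη w)
  have h2 := abs_le.1 (cW_near hη v)
  have h3 := abs_le.1 (cZ_near hη w)
  have h4 := abs_le.1 (cZ_near hη v)
  obtain ⟨k, c⟩ := w
  obtain ⟨l, d⟩ := v
  simp only [keyEdge, Bool.or_eq_true, Bool.and_eq_true, beq_iff_eq] at h
  norm_num at hη'
  have hd : |cW η (l, d) - cW η (k, c)| ≤ 1.1 ∧ |cZ η (l, d) - cZ η (k, c)| ≤ 1.1 := by
    rw [abs_le, abs_le]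
    have hsgn := neg_one_pow_eq_or ℝ k
    rcases h with (⟨⟨rfl, rfl⟩, rfl⟩ | ⟨⟨rfl, rfl⟩, rfl⟩) | ⟨⟨rfl, rfl⟩, rfl⟩ <;>
    simp [baseW, pow_succ] at h1 h2 h3 h4 <;>
    rcases hsgn with e | e <;> rw [e] at h1 h2 <;>
    refine ⟨⟨?_, ?_⟩, ?_, ?_⟩ <;> norm_num <;> linarith
  obtain ⟨hw, hz⟩ := hd
  rw [abs_le] at hw hz
  norm_num at hw hz
  unfold hexDist hexNorm
  simp only [max_lt_iff, abs_lt]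
  unfold cX cY
  norm_num
  refine ⟨⟨?_, ?_⟩, ⟨?_, ?_⟩, ?_, ?_⟩ <;> linarith

/-- Key edges are edges of `Θ₆`: a point coming before the target is closer than the target, hence
on a neighbouring level, where the integer model excludes it. -/
lemma keyEdge_thetaEdge (hη : 0 < η) (hη' : η ≤ 1 / 10 ^ 6) {n : ℕ} {w v : ℕ × Fin 4}
    (h : keyEdge w v = true) (hw : 1 ≤ w.1) (hv : v.1 ≤ n) :
    ThetaEdge (spiral η n) (famPt (cX η) (cY η) w) (famPt (cX η) (cY η) v) := by
  have hgen := generic_points hη hη'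
  have hh := hexDist_keyEdge hη hη' h
  obtain ⟨k, c⟩ := w
  obtain ⟨l, d⟩ := v
  have hkl : (l = k ∨ l = k + 1) ∧ (k, c) ≠ (l, d) := by
    simp only [keyEdge, Bool.or_eq_true, Bool.and_eq_true, beq_iff_eq] at h
    rcases h with (⟨⟨rfl, rfl⟩, rfl⟩ | ⟨⟨rfl, rfl⟩, rfl⟩) | ⟨⟨rfl, rfl⟩, rfl⟩ <;> simp
  simp only at hw hv
  refine hgen.thetaEdge hkl.2 (fun z hz => ?_) (mem_spiral hw (by simp; omega))
    (mem_spiral (by simp; omega) hv) ?_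
  · obtain ⟨i, -, -, hi⟩ := exists_of_mem_spiral hz
    exact ⟨i, hi⟩
  rintro ⟨m, e⟩ hq1 hq2 hq hlt
  obtain ⟨K, rfl⟩ : ∃ K, k = K + 1 := ⟨k - 1, by omega⟩
  have hm : m ≤ K + 2 ∧ K ≤ m := by
    have h5 := abs_le.1 ((abs_cZ_le_hexDist (η := η) (K + 1, c) (m, e)).trans (hlt.trans hh).le)
    have h3 := abs_le.1 (cZ_near hη (K + 1, c))
    have h4 := abs_le.1 (cZ_near hη (m, e))
    norm_num at hη' h5
    push_cast at h3
    simp only at h3 h4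
    have a : (m : ℝ) < K + 3 := by linarith
    have b : (K : ℝ) < m + 1 := by linarith
    have a' : m < K + 3 := by exact_mod_cast a
    have b' : K < m + 1 := by exact_mod_cast b
    omega
  obtain ⟨j, rfl⟩ : ∃ j : Fin 4, m = K + j := ⟨⟨m - K, by omega⟩, by simp; omega⟩
  obtain ⟨b, rfl⟩ : ∃ b : Fin 4, l = K + b := ⟨⟨l - K, by omega⟩, by simp; omega⟩
  intro hb
  have hb' := (before_window hη hη' K 1 b j c d e).1 hb
  have := model_keyEdge (decide (Odd K)) c (b, d) (j, e) (by simp; omega)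
    (by
      simp only [keyEdge, Bool.or_eq_true, Bool.and_eq_true, beq_iff_eq] at h ⊢
      omega)
    (by
      intro e'
      simp only [Prod.mk.injEq] at e'
      exact hq1 (by rw [e'.1, e'.2]))
    (by
      intro e'
      simp only [Prod.mk.injEq] at e'
      exact hq2 (by rw [e'.1, e'.2]))
  exact absurd hb' (by
    rw [show ((1 : Fin 4) : ℕ) = 1 from rfl]
    simp only at this
    rw [this]
    simp)

/-- A bad pair is not an edge of `ΘΘ₆`. The base `K ≥ 1` of the window is the lower of the two
levels, or the level below if both points are on the same level. -/
lemma not_edge_window (hη : 0 < η) (hη' : η ≤ 1 / 10 ^ 6) {n K : ℕ} (hK : 1 ≤ K)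
    {a b c d : Fin 4} (hab : (a ≠ b ∧ (a = 0 ∨ b = 0)) ∨ (a = 1 ∧ b = 1))
    (hbad : badPair (a, c) (b, d) = true) (ha : K + a ≤ n) (hb : K + b ≤ n) :
    ¬ ThetaThetaEdge (spiral η n) (famPt (cX η) (cY η) (K + a, c))
      (famPt (cX η) (cY η) (K + b, d)) := by
  have hgen := generic_points hη hη'
  have huv : ((K + a, c) : ℕ × Fin 4) ≠ (K + b, d) := by
    rintro e
    simp only [Prod.mk.injEq, Nat.add_left_cancel_iff] at e
    simp [badPair, e.1, e.2] at hbad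
  have lift : ∀ {x y : Fin 4 × Fin 4}, x ≠ y → ((K + x.1, x.2) : ℕ × Fin 4) ≠ (K + y.1, y.2) := by
    intro x y hxy e
    simp only [Prod.mk.injEq, Nat.add_left_cancel_iff] at e
    exact hxy (Prod.ext (Fin.ext e.1) e.2)
  obtain ⟨⟨j, e⟩, hj, h1, h2, hkill⟩ := model_badPair (decide (Odd K)) (a, c) (b, d) hab hbad
  have hjn : K + j ≤ n := by
    rcases hj with h | h
    · have : (j : ℕ) ≤ a := h
      omega
    · have : (j : ℕ) ≤ b := h
      omega
  rcases hkill with hkill | ⟨hkey, hkill⟩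
  · intro hE
    exact hgen.not_thetaEdge huv (lift h1).symm (lift h2) (mem_spiral (by simp; omega) hjn)
      ((before_window hη hη' K a b j c d e).2 hkill) hE.1
  · refine hgen.not_thetaThetaEdge huv (lift h1).symm (lift h2)
      (keyEdge_thetaEdge hη hη' ?_ (by simp; omega) hb)
      ((before_window hη hη' K b a j d c e).2 hkill)
    simp only [keyEdge, Bool.or_eq_true, Bool.and_eq_true, beq_iff_eq] at hkey ⊢
    omega

lemma types_ne : ∀ c d : Fin 4, ((c == 3) != (d == 3)) = true ↔ ¬ (c = 3 ↔ d = 3) := by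
  decide

lemma types_eq : ∀ c d : Fin 4, ((c == 3) == (d == 3)) = true ↔ (c = 3 ↔ d = 3) := by
  decide

/-- Edges join points of one class type on one level, the two types on the lowest level, or the
two types on consecutive levels. -/
lemma edge_cases (hη : 0 < η) (hη' : η ≤ 1 / 10 ^ 6) {n : ℕ} {u v : ℕ × Fin 4}
    (hu : 1 ≤ u.1) (hu' : u.1 ≤ n) (hv : 1 ≤ v.1) (hv' : v.1 ≤ n)
    (hE : ThetaThetaEdge (spiral η n) (famPt (cX η) (cY η) u) (famPt (cX η) (cY η) v)) :
    (u.1 = v.1 ∧ (u.2 = 3 ↔ v.2 = 3)) ∨ (u.1 = 1 ∧ v.1 = 1 ∧ ¬ (u.2 = 3 ↔ v.2 = 3)) ∨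
      ((u.1 = v.1 + 1 ∨ v.1 = u.1 + 1) ∧ ¬ (u.2 = 3 ↔ v.2 = 3)) := by
  have hgen := generic_points hη hη'
  by_cases hfar : v.1 + 4 ≤ u.1 ∨ u.1 + 4 ≤ v.1
  · exfalso
    obtain ⟨w, h1, h2, h3, h4, hb⟩ := before_far hη hη' hfar
    refine hgen.not_thetaEdge (fun e => ?_) h3.symm h4 (mem_spiral (by omega) (by omega)) hb hE.1
    rw [e] at hfar
    omega
  obtain ⟨k, c⟩ := u
  obtain ⟨l, d⟩ := v
  simp only at hu hu' hv hv' hfar ⊢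
  by_cases hkl : k = l
  · subst hkl
    by_cases hcd : (c = 3 ↔ d = 3)
    · exact Or.inl ⟨rfl, hcd⟩
    · by_cases hk : k = 1
      · exact Or.inr (Or.inl ⟨hk, hk, hcd⟩)
      · exfalso
        obtain ⟨K, rfl⟩ : ∃ K, k = K + 1 := ⟨k - 1, by omega⟩
        refine not_edge_window hη hη' (K := K) (a := 1) (b := 1) (by omega) (Or.inr ⟨rfl, rfl⟩)
          ?_ hu' hu' hE
        simp only [badPair, if_true]
        exact (types_ne c d).2 hcd
  · obtain ⟨K, a, b, rfl, rfl, hab⟩ := exists_window (i := k) (j := l) (by omega) (by omega)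
    have hne : a ≠ b := fun e => hkl (by rw [e])
    have hne' : (a : ℕ) ≠ b := fun e => hne (Fin.ext e)
    have hK : 1 ≤ K := by
      rcases hab with rfl | rfl
      · simpa using hu
      · simpa using hv
    have hbad : ¬ badPair (a, c) (b, d) = true := fun h =>
      not_edge_window hη hη' hK (Or.inl ⟨hne, hab⟩) h hu' hv' hE
    simp only [badPair, if_neg hne'] at hbad
    split_ifs at hbad with h
    · refine Or.inr (Or.inr ⟨by omega, fun hcd => hbad ((types_eq c d).2 hcd)⟩)
    · exact absurd rfl hbad

/-- A signed depth, positive on one arm and negative on the other, where the arm of the outer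
point of a level is opposite to the arm of its pivots. -/
def potential (i : ℕ × Fin 4) : ℝ :=
  (-1) ^ (i.1 + if i.2 = 3 then 1 else 0) * ((i.1 : ℝ) - 1 / 2)

lemma le_of_sq_le_sq' {a b : ℝ} (h : a ^ 2 ≤ b ^ 2) (hb : 0 ≤ b) : a ≤ b :=
  (le_abs_self a).trans (abs_le_of_sq_le_sq h hb)

lemma dist_spiral (u v : ℕ × Fin 4) :
    dist (famPt (cX η) (cY η) u) (famPt (cX η) (cY η) v) ^ 2 =
      (3 * (cZ η u - cZ η v) ^ 2 + (cW η u - cW η v) ^ 2) / 4 := by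
  rw [dist_famPt, cZ_eq, cZ_eq, cW_eq, cW_eq]
  ring

lemma baseW_pivot {c : Fin 4} (h : c ≠ 3) : baseW c = -1 := by
  revert h
  revert c
  decide

lemma baseW_outer : baseW 3 = 3 := rfl

/-- An edge between the two types on consecutive levels has length about one. -/
lemma dist_consecutive (hη : 0 < η) (hη' : η ≤ 1 / 10 ^ 6) {u v : ℕ × Fin 4}
    (h : v.1 = u.1 + 1) (hcd : ¬ (u.2 = 3 ↔ v.2 = 3)) :
    1 - 100 * η ≤ dist (famPt (cX η) (cY η) u) (famPt (cX η) (cY η) v) := by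
  have h1 := abs_le.1 (cW_near hη u)
  have h2 := abs_le.1 (cW_near hη v)
  have h3 := abs_le.1 (cZ_near hη u)
  have h4 := abs_le.1 (cZ_near hη v)
  have hd := dist_spiral (η := η) u v
  have h0 : 0 ≤ dist (famPt (cX η) (cY η) u) (famPt (cX η) (cY η) v) := dist_nonneg
  rw [h] at h2 h4
  rw [pow_succ] at h2
  push_cast at h4
  norm_num at hη'
  have hz : 1 - 100 * η ≤ |cZ η u - cZ η v| := by
    rw [le_abs]
    right
    linarith
  have hw : 1 - 100 * η ≤ |cW η u - cW η v| := by
    rw [le_abs]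
    by_cases hc : u.2 = 3
    · have hd' : v.2 ≠ 3 := fun e => hcd (by simp [hc, e])
      rw [hc, baseW_outer] at h1
      rw [baseW_pivot hd'] at h2
      push_cast at h1 h2
      rcases neg_one_pow_eq_or ℝ u.1 with e | e <;> rw [e] at h1 h2
      · left; linarith
      · right; linarith
    · have hd' : v.2 = 3 := by tauto
      rw [baseW_pivot hc] at h1
      rw [hd', baseW_outer] at h2
      push_cast at h1 h2
      rcases neg_one_pow_eq_or ℝ u.1 with e | e <;> rw [e] at h1 h2
      · left; linarith
      · right; linarith
  refine le_of_sq_le_sq' ?_ h0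
  rw [hd, ← sq_abs (cZ η u - cZ η v), ← sq_abs (cW η u - cW η v)]
  have : 0 ≤ 1 - 100 * η := by linarith
  nlinarith

/-- Pivots and the outer point of one level are at distance about one. -/
lemma dist_same_level (hη : 0 < η) (hη' : η ≤ 1 / 10 ^ 6) {u v : ℕ × Fin 4}
    (h : u.1 = v.1) (hc : u.2 ≠ 3) (hd : v.2 = 3) :
    1 - 100 * η ≤ dist (famPt (cX η) (cY η) u) (famPt (cX η) (cY η) v) ∧
      dist (famPt (cX η) (cY η) u) (famPt (cX η) (cY η) v) ≤ 1 + 100 * η := by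
  have h1 := abs_le.1 (cW_near hη u)
  have h2 := abs_le.1 (cW_near hη v)
  have h3 := abs_le.1 (cZ_near hη u)
  have h4 := abs_le.1 (cZ_near hη v)
  have hD := dist_spiral (η := η) u v
  have h0 : 0 ≤ dist (famPt (cX η) (cY η) u) (famPt (cX η) (cY η) v) := dist_nonneg
  norm_num at hη'
  rw [h, baseW_pivot hc] at h1
  rw [hd, baseW_outer] at h2
  rw [h] at h3
  push_cast at h1 h2
  have hz : |cZ η u - cZ η v| ≤ 14 * η := by
    rw [abs_le]
    constructor <;> linarith
  have hw : 2 - 22 * η ≤ |cW η u - cW η v| ∧ |cW η u - cW η v| ≤ 2 + 22 * η := by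
    rw [le_abs, abs_le]
    rcases neg_one_pow_eq_or ℝ v.1 with e | e <;> rw [e] at h1 h2
    · exact ⟨Or.inr (by linarith), by linarith, by linarith⟩
    · exact ⟨Or.inl (by linarith), by linarith, by linarith⟩
  rw [← sq_abs (cZ η u - cZ η v), ← sq_abs (cW η u - cW η v)] at hD
  have hz0 := abs_nonneg (cZ η u - cZ η v)
  constructor
  · refine le_of_sq_le_sq' ?_ h0
    rw [hD]
    nlinarith
  · refine le_of_sq_le_sq' ?_ (by linarith)
    rw [hD]
    nlinarith

lemma potential_consecutive {u v : ℕ × Fin 4} (h : v.1 = u.1 + 1)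
    (hcd : ¬ (u.2 = 3 ↔ v.2 = 3)) : |potential u - potential v| = 1 := by
  unfold potential
  rw [h]
  by_cases hc : u.2 = 3
  · have hd : v.2 ≠ 3 := fun e => hcd (by simp [hc, e])
    rw [if_pos hc, if_neg hd]
    rcases neg_one_pow_eq_or ℝ u.1 with e | e <;> simp [pow_succ, e]
  · have hd : v.2 = 3 := by tauto
    rw [if_neg hc, if_pos hd]
    rcases neg_one_pow_eq_or ℝ u.1 with e | e <;> simp [pow_succ, e]

/-- The potential is Lipschitz along edges, with constant close to one. -/
lemma edge_lipschitz (hη : 0 < η) (hη' : η ≤ 1 / 10 ^ 6) {n : ℕ} {u v : ℕ × Fin 4}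
    (hu : 1 ≤ u.1) (hu' : u.1 ≤ n) (hv : 1 ≤ v.1) (hv' : v.1 ≤ n)
    (hE : ThetaThetaEdge (spiral η n) (famPt (cX η) (cY η) u) (famPt (cX η) (cY η) v)) :
    (1 - 100 * η) * |potential u - potential v| ≤
      dist (famPt (cX η) (cY η) u) (famPt (cX η) (cY η) v) := by
  rcases edge_cases hη hη' hu hu' hv hv' hE with ⟨h1, h2⟩ | ⟨h1, h2, h3⟩ | ⟨h1 | h1, h2⟩
  · have : potential u = potential v := by
      simp only [potential, h1, h2]
    rw [this, sub_self, abs_zero, mul_zero]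
    exact dist_nonneg
  · have hp : |potential u - potential v| = 1 := by
      simp only [potential, h1, h2]
      by_cases hc : u.2 = 3
      · have hd : v.2 ≠ 3 := fun e => h3 (by simp [hc, e])
        simp [hc, hd]
        norm_num
      · have hd : v.2 = 3 := by tauto
        simp [hc, hd]
        norm_num
    rw [hp, mul_one]
    by_cases hc : u.2 = 3
    · have hd : v.2 ≠ 3 := fun e => h3 (by simp [hc, e])
      rw [dist_comm]
      exact (dist_same_level hη hη' (h2.trans h1.symm) hd hc).1
    · exact (dist_same_level hη hη' (h1.trans h2.symm) hc (by tauto)).1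
  · have hp := potential_consecutive h1 (fun e => h2 e.symm)
    rw [abs_sub_comm, dist_comm]
    rw [hp, mul_one]
    exact dist_consecutive hη hη' h1 (fun e => h2 e.symm)
  · rw [potential_consecutive h1 h2, mul_one]
    exact dist_consecutive hη hη' h1 h2

end Spiral

/-- A function that is Lipschitz along edges bounds path lengths from below. -/
lemma path_lower_bound {A : ℂ → ℂ → Prop} {F : ℂ → ℝ} {L : ℝ} (hL : 0 ≤ L)
    (hA : ∀ a b, A a b → L * |F a - F b| ≤ dist a b) (p : List ℂ) :
    ∀ u v, IsPath A u v p → L * |F u - F v| ≤ pathLength p := by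
  induction p with
  | nil =>
    rintro u v ⟨-, h, -⟩
    simp at h
  | cons a q ih =>
    rintro u v ⟨h1, h2, h3⟩
    simp at h2
    subst h2
    cases q with
    | nil =>
      simp at h3
      subst h3
      simp [pathLength]
    | cons b r =>
      have hch := List.isChain_cons_cons.1 h1
      have h4 := ih b v ⟨hch.2, rfl, by simpa using h3⟩
      have h5 := hA a b hch.1
      have h6 : pathLength (a :: b :: r) = dist a b + pathLength (b :: r) := by
        simp [pathLength]
      have h7 := mul_le_mul_of_nonneg_left (abs_sub_le (F a) (F b) (F v)) hL
      rw [h6]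
      linarith

/-- For every `n ≥ 2` and `ε > 0` there is a set `S` of `4n` points in
general position and `u, v ∈ S` such that every path between `u` and `v` in `ΘΘ₆(S)` has
length at least `(1 - ε)·(2n - 1)·|uv|`. -/
theorem thetaTheta6_linear_spanning_ratio (n : ℕ) (hn : 2 ≤ n) (ε : ℝ) (hε : 0 < ε) :
    ∃ S : Finset ℂ, S.card = 4 * n ∧ GenPos S ∧
      ∃ u ∈ S, ∃ v ∈ S, u ≠ v ∧
        ∀ p : List ℂ, IsPath (TTAdj S) u v p →
          (1 - ε) * (2 * (n : ℝ) - 1) * dist u v ≤ pathLength p := by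
  classical
  set ε' : ℝ := min ε 1 with hε'
  have he0 : 0 < ε' := lt_min hε one_pos
  have he1 : ε' ≤ 1 := min_le_right _ _
  have he2 : ε' ≤ ε := min_le_left _ _
  obtain ⟨η, hη, hη', hηε⟩ : ∃ η : ℝ, 0 < η ∧ η ≤ 1 / 10 ^ 6 ∧ 200 * η ≤ ε' :=
    ⟨ε' / 10 ^ 6, by positivity, by gcongr, by linarith⟩
  have hη'' : η ≤ 1 / 1000000 := by norm_num at hη' ⊢; exact hη'
  have hgen := generic_points hη hη'
  refine ⟨spiral η n, ?_, ?_, famPt (cX η) (cY η) (n, 0), mem_spiral (by simp; omega) le_rfl,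
    famPt (cX η) (cY η) (n, 3), mem_spiral (by simp; omega) le_rfl, ?_, ?_⟩
  · rw [spiral, Finset.card_image_of_injective _ hgen.injective]
    simp [mul_comm]
  · refine hgen.genPos fun z hz => ?_
    obtain ⟨i, -, -, hi⟩ := exists_of_mem_spiral hz
    exact ⟨i, hi⟩
  · intro h
    have := hgen.injective h
    simp at this
  intro p hp
  -- The potential, transported to points of the plane.
  set F : ℂ → ℝ := fun z => potential (Function.invFun (famPt (cX η) (cY η)) z) with hF
  have hFi : ∀ i, F (famPt (cX η) (cY η) i) = potential i := by
    intro i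
    simp only [hF, Function.leftInverse_invFun hgen.injective i]
  have hL : 0 ≤ 1 - 100 * η := by linarith
  have hTT : ∀ a b, ThetaThetaEdge (spiral η n) a b →
      (1 - 100 * η) * |F a - F b| ≤ dist a b := by
    intro a b hE
    obtain ⟨i, hi, hi', rfl⟩ := exists_of_mem_spiral hE.1.1
    obtain ⟨j, hj, hj', rfl⟩ := exists_of_mem_spiral hE.1.2.1
    rw [hFi, hFi]
    exact edge_lipschitz hη hη' hi hi' hj hj' hE
  have key := path_lower_bound (A := TTAdj (spiral η n)) hL (fun a b hab => by
    rcases hab with h | h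
    · exact hTT a b h
    · rw [abs_sub_comm, dist_comm]
      exact hTT b a h) p _ _ hp
  have hn' : (2 : ℝ) ≤ n := by exact_mod_cast hn
  have hpot : |F (famPt (cX η) (cY η) (n, 0)) - F (famPt (cX η) (cY η) (n, 3))| = 2 * n - 1 := by
    rw [hFi, hFi]
    have h0 : potential (n, 0) - potential (n, 3) = (-1) ^ n * (2 * n - 1) := by
      simp [potential, pow_succ]
      ring
    rw [h0, abs_mul, abs_pow, abs_neg, abs_one, one_pow, one_mul, abs_of_nonneg (by linarith)]
  rw [hpot] at key
  refine le_trans ?_ key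
  have hd := (dist_same_level hη hη' (u := (n, 0)) (v := (n, 3)) rfl (by simp) rfl).2
  have h1 : (1 - ε) * dist (famPt (cX η) (cY η) (n, 0)) (famPt (cX η) (cY η) (n, 3)) ≤
      1 - 100 * η := by
    calc _ ≤ (1 - ε') * dist (famPt (cX η) (cY η) (n, 0)) (famPt (cX η) (cY η) (n, 3)) := by
          gcongr
      _ ≤ (1 - ε') * (1 + 100 * η) := by
          gcongr
      _ ≤ 1 - 100 * η := by nlinarith
  calc _ = (1 - ε) * dist (famPt (cX η) (cY η) (n, 0)) (famPt (cX η) (cY η) (n, 3)) *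
        (2 * n - 1) := by ring
    _ ≤ (1 - 100 * η) * (2 * n - 1) := by
        gcongr
        linarith

end
end

section
/- The graph YY₆ is not a spanner, even for points in convex position: for every real t there exists a finite set S of points in the plane in convex position and in general position and points u, v ∈ S such that every path between u and v in YY₆(S) has length greater than t·|uv|. -/
/-!
The point set is `{q 2, …, q N}` with `q m = (-m(m+1), (-1)^m √3 m)`: a zigzag between the two
branches of the curve `x = -(s² + |s|)`, `y = √3 s`. This curve is strictly concave, so the points
are in convex position. Consecutive triples `q m`, `q (m-1)`, `q (m-2)` are close to equilateral.

For `l < m` the vector `q l - q m` points to the right with slope of absolute value strictly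
between `0` and `√3`. Hence every `q m` sees all points of smaller index in one single cone, and
all points of larger index in two cones, according to the branch they lie on (`sec_fwd`,
`sec_bwd`). For `4 ≤ m` the points are arranged so that `|q m q (m-2)| < |q m q l|` for every
`l < m` on the other branch (`dist_two_lt`). So a Yao edge leaving `q m` towards a smaller index
stays on its branch, unless `m = 3`. A Yao edge from `q l` to a larger index on the other branch
ends at `q (l+1)`, and there it loses against the shorter edge `q (l-1) → q (l+1)`, unless
`l = 2`. Therefore the only edge of `YY₆` between the two branches joins `q 2` and `q 3`
(`adj_cross`).

Every path from `q N` to `q (N-1)` must reach this edge, hence has length at least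
`N(N+1) - 12`, whereas `|q N q (N-1)| ≤ 4N`.
-/

open Real

noncomputable section

/-- `u → v` is a directed edge of the Yao graph `Y₆(S)`: `v` minimizes the Euclidean
distance from `u` among the points of `S` in the cone of `u` containing `v`. -/
def YaoEdge (S : Finset ℂ) (u v : ℂ) : Prop :=
  u ∈ S ∧ v ∈ S ∧ v ≠ u ∧
    ∀ w ∈ S, w ∈ cone (coneIdx u v) u → dist u v ≤ dist u w

/-- `u → v` is a directed edge of `YY₆(S)`: it is an edge of `Y₆(S)` and among all incoming
`Y₆`-edges `w → v` with `w` in the same cone of `v` as `u`, it minimizes `|wv|`. -/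
def YaoYaoEdge (S : Finset ℂ) (u v : ℂ) : Prop :=
  YaoEdge S u v ∧
    ∀ w, YaoEdge S w v → coneIdx v w = coneIdx v u → dist u v ≤ dist w v

/-- Undirected adjacency in `YY₆(S)`. -/
def YYAdj (S : Finset ℂ) (u v : ℂ) : Prop := YaoYaoEdge S u v ∨ YaoYaoEdge S v u

/-! ### Sectors -/

/-- The vector `z` points into the interior of the `i`-th sector. -/
def Sec (i : ℕ) (z : ℂ) : Prop :=
  argIn z ∈ Set.Ioo (((i : ℝ) - 1) * (π / 3)) ((i : ℝ) * (π / 3))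

lemma abs_arg_lt {z : ℂ} (hre : 0 < z.re) (h1 : z.im < √3 * z.re) (h2 : -(√3 * z.re) < z.im) :
    |Complex.arg z| < π / 3 := by
  have hp := Real.pi_pos
  have h := abs_lt.1 (Complex.abs_arg_lt_pi_div_two_iff.2 (Or.inl hre))
  have ht := Complex.tan_arg z
  rw [abs_lt]
  constructor
  · by_contra! hc
    have := Real.strictMonoOn_tan.monotoneOn (a := Complex.arg z) (b := -(π / 3))
      ⟨h.1, h.2⟩ ⟨by linarith, by linarith⟩ hc
    rw [Real.tan_neg, Real.tan_pi_div_three, ht, div_le_iff₀ hre] at this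
    linarith
  · by_contra! hc
    have := Real.strictMonoOn_tan.monotoneOn (a := π / 3) (b := Complex.arg z)
      ⟨by linarith, by linarith⟩ ⟨h.1, h.2⟩ hc
    rw [Real.tan_pi_div_three, ht, le_div_iff₀ hre] at this
    linarith

lemma sec_one {z : ℂ} (hre : 0 < z.re) (him : 0 < z.im) (h : z.im < √3 * z.re) : Sec 1 z := by
  have h0 : 0 < √3 * z.re := by positivity
  have ha := abs_lt.1 (abs_arg_lt hre h (by linarith))
  have hpos : 0 < Complex.arg z := by
    refine lt_of_le_of_ne (Complex.arg_nonneg_iff.2 him.le) fun hc => ?_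
    have := (Complex.arg_eq_zero_iff.1 hc.symm).2
    linarith
  simp only [Sec, argIn, if_pos hpos.le, Set.mem_Ioo]
  push_cast
  constructor <;> linarith [ha.2]

lemma sec_six {z : ℂ} (hre : 0 < z.re) (him : z.im < 0) (h : -(√3 * z.re) < z.im) :
    Sec 6 z := by
  have h0 : 0 < √3 * z.re := by positivity
  have ha := abs_lt.1 (abs_arg_lt hre (by linarith) h)
  have hneg : Complex.arg z < 0 := Complex.arg_neg_iff.2 him
  simp only [Sec, argIn, if_neg (not_le.2 hneg), Set.mem_Ioo]
  push_cast
  constructor <;> linarith [ha.1]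

lemma sec_three {z : ℂ} (hre : z.re < 0) (him : 0 < z.im) (h : z.im < -(√3 * z.re)) :
    Sec 3 z := by
  have h0 : √3 * z.re < 0 := mul_neg_of_pos_of_neg (by positivity) hre
  have ha := abs_lt.1 (abs_arg_lt (z := -z) (by simpa using hre) (by simp; linarith)
    (by simp; linarith))
  rw [Complex.arg_neg_eq_arg_sub_pi_of_im_pos him] at ha
  have hpos : 0 ≤ Complex.arg z := Complex.arg_nonneg_iff.2 him.le
  have hneg : Complex.arg (-z) < 0 := Complex.arg_neg_iff.2 (by simpa using him)
  rw [Complex.arg_neg_eq_arg_sub_pi_of_im_pos him] at hneg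
  simp only [Sec, argIn, if_pos hpos, Set.mem_Ioo]
  push_cast
  constructor <;> linarith [ha.1]

lemma sec_four {z : ℂ} (hre : z.re < 0) (him : z.im < 0) (h : √3 * z.re < z.im) : Sec 4 z := by
  have h0 : √3 * z.re < 0 := mul_neg_of_pos_of_neg (by positivity) hre
  have ha := abs_lt.1 (abs_arg_lt (z := -z) (by simpa using hre) (by simp; linarith)
    (by simp; linarith))
  have hneg : Complex.arg z < 0 := Complex.arg_neg_iff.2 him
  have hpos : 0 < Complex.arg (-z) := by
    refine lt_of_le_of_ne (Complex.arg_nonneg_iff.2 (by simpa using him.le)) fun hc => ?_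
    have := (Complex.arg_eq_zero_iff.1 hc.symm).2
    simp at this
    linarith
  rw [Complex.arg_neg_eq_arg_add_pi_of_im_neg him] at ha hpos
  simp only [Sec, argIn, if_neg (not_le.2 hneg), Set.mem_Ioo]
  push_cast
  constructor <;> linarith [ha.2]

lemma Sec.ne {i : ℕ} {z : ℂ} (h : Sec i z) (j : ℕ) : argIn z ≠ (j : ℝ) * (π / 3) := by
  intro he
  have hp : 0 < π / 3 := by positivity
  obtain ⟨h1, h2⟩ := h
  rw [he] at h1 h2
  have h1' := lt_of_mul_lt_mul_right h1 hp.le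
  have h2' := lt_of_mul_lt_mul_right h2 hp.le
  have h3 : (i : ℝ) < j + 1 := by linarith
  have h3' : i < j + 1 := by exact_mod_cast h3
  have h4' : j < i := by exact_mod_cast h2'
  omega

/-- An open sector determines the index of any half-open sector it meets. -/
lemma Sec.eq_of_mem_cone {i k : ℕ} {u w : ℂ} (h : Sec i (w - u)) (hw : w ∈ cone k u) : i = k := by
  have hp : 0 < π / 3 := by positivity
  obtain ⟨h1, h2⟩ := h
  obtain ⟨-, h3, h4⟩ := hw
  have h5 := lt_of_mul_lt_mul_right (h1.trans h4) hp.le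
  have h6 := lt_of_mul_lt_mul_right (h3.trans_lt h2) hp.le
  have h7 : (i : ℝ) < k + 1 := by linarith
  have h8 : (k : ℝ) < i + 1 := by linarith
  have h7' : i < k + 1 := by exact_mod_cast h7
  have h8' : k < i + 1 := by exact_mod_cast h8
  omega

lemma Sec.coneIdx_eq {i : ℕ} {u v : ℂ} (hi : 1 ≤ i) (h : Sec i (v - u)) : coneIdx u v = i := by
  have hp : 0 < π / 3 := by positivity
  obtain ⟨h1, h2⟩ := h
  have hf : ⌊argIn (v - u) / (π / 3)⌋ = (i : ℤ) - 1 := by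
    rw [Int.floor_eq_iff, le_div_iff₀ hp, div_lt_iff₀ hp]
    push_cast
    exact ⟨h1.le, by simpa using h2⟩
  rw [coneIdx, hf]
  omega

lemma Sec.mem_cone {i : ℕ} {u w : ℂ} (hne : w ≠ u) (h : Sec i (w - u)) : w ∈ cone i u :=
  ⟨hne, h.1.le, h.2⟩

/-! ### The zigzag points -/

/-- The `m`-th point of the zigzag; even indices lie on the upper branch. -/
def q (m : ℕ) : ℂ := ⟨-((m : ℝ) * (m + 1)), (-1) ^ m * (√3 * m)⟩

/-- The point set `{q 2, …, q N}`. -/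
def ptSet (N : ℕ) : Finset ℂ := (Finset.Icc 2 N).image q

lemma mem_ptSet {N : ℕ} {z : ℂ} : z ∈ ptSet N ↔ ∃ m, 2 ≤ m ∧ m ≤ N ∧ q m = z := by
  simp [ptSet, and_assoc]

lemma q_re (m : ℕ) : (q m).re = -((m : ℝ) * (m + 1)) := rfl

lemma q_im_even {m : ℕ} (h : Even m) : (q m).im = √3 * m := by simp [q, h.neg_one_pow]

lemma q_im_odd {m : ℕ} (h : ¬ Even m) : (q m).im = -(√3 * m) := by
  simp [q, (Nat.not_even_iff_odd.1 h).neg_one_pow]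

lemma q_re_lt {l m : ℕ} (h : l < m) : (q m).re < (q l).re := by
  have h' : (l : ℝ) + 1 ≤ m := by exact_mod_cast h
  have h0 : (0 : ℝ) ≤ l := l.cast_nonneg
  rw [q_re, q_re]
  nlinarith

lemma q_ne {l m : ℕ} (h : l ≠ m) : q l ≠ q m := by
  intro he
  rcases lt_or_gt_of_ne h with h | h
  · exact (q_re_lt h).ne (by rw [he])
  · exact (q_re_lt h).ne (by rw [he])

lemma q_im_pos_iff {m : ℕ} (hm : 2 ≤ m) : 0 < (q m).im ↔ Even m := by
  have h0 : (0 : ℝ) < m := by exact_mod_cast (by omega : 0 < m)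
  have h1 : 0 < √3 * (m : ℝ) := by positivity
  by_cases h : Even m
  · simp only [q_im_even h, h, h1]
  · simp only [q_im_odd h, h, iff_false, not_lt]
    linarith

/-- Index of the cone of `q m` containing all points of smaller index. -/
def fIdx (m : ℕ) : ℕ := if Even m then 6 else 1

/-- Index of the cone in which a point of smaller index sees `q m`. -/
def bIdx (m : ℕ) : ℕ := if Even m then 3 else 4

lemma re_diff {l m : ℕ} (h : l < m) : ((m : ℝ) + l) < (q l).re - (q m).re := by
  have h' : (l : ℝ) + 1 ≤ m := by exact_mod_cast h
  have h0 : (0 : ℝ) ≤ l := l.cast_nonneg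
  rw [q_re, q_re]
  nlinarith

lemma sec_fwd {l m : ℕ} (h : l < m) : Sec (fIdx m) (q l - q m) := by
  have hd := re_diff h
  have h' : (l : ℝ) < m := by exact_mod_cast h
  have h0 : (0 : ℝ) ≤ l := l.cast_nonneg
  have h3 : 0 < √3 := by positivity
  have hre : 0 < (q l - q m).re := by rw [Complex.sub_re]; linarith
  have hb : √3 * (m + l : ℝ) < √3 * (q l - q m).re := by
    rw [Complex.sub_re]; exact mul_lt_mul_of_pos_left hd h3
  have hlm : √3 * (l : ℝ) < √3 * m := mul_lt_mul_of_pos_left h' h3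
  have hl : 0 ≤ √3 * (l : ℝ) := by positivity
  rw [mul_add] at hb
  unfold fIdx
  split_ifs with hm
  · apply sec_six hre <;> by_cases hl' : Even l <;>
      simp only [Complex.sub_im, q_im_even, q_im_odd, hm, hl', not_false_eq_true] <;> linarith
  · apply sec_one hre <;> by_cases hl' : Even l <;>
      simp only [Complex.sub_im, q_im_even, q_im_odd, hm, hl', not_false_eq_true] <;> linarith

lemma sec_bwd {l m : ℕ} (h : l < m) : Sec (bIdx m) (q m - q l) := by
  have hd := re_diff h
  have h' : (l : ℝ) < m := by exact_mod_cast h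
  have h0 : (0 : ℝ) ≤ l := l.cast_nonneg
  have h3 : 0 < √3 := by positivity
  have hre : (q m - q l).re < 0 := by rw [Complex.sub_re]; linarith
  have hb : √3 * (q m - q l).re < √3 * (-m + -l : ℝ) := by
    rw [Complex.sub_re]; exact mul_lt_mul_of_pos_left (by linarith) h3
  have hlm : √3 * (l : ℝ) < √3 * m := mul_lt_mul_of_pos_left h' h3
  have hl : 0 ≤ √3 * (l : ℝ) := by positivity
  rw [mul_add] at hb
  unfold bIdx
  split_ifs with hm
  · apply sec_three hre <;> by_cases hl' : Even l <;>
      simp only [Complex.sub_im, q_im_even, q_im_odd, hm, hl', not_false_eq_true] <;> linarith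
  · apply sec_four hre <;> by_cases hl' : Even l <;>
      simp only [Complex.sub_im, q_im_even, q_im_odd, hm, hl', not_false_eq_true] <;> linarith

lemma one_le_fIdx (m : ℕ) : 1 ≤ fIdx m := by unfold fIdx; split_ifs <;> norm_num

lemma one_le_bIdx (m : ℕ) : 1 ≤ bIdx m := by unfold bIdx; split_ifs <;> norm_num

lemma fIdx_ne_bIdx (l m : ℕ) : fIdx l ≠ bIdx m := by
  unfold fIdx bIdx; split_ifs <;> norm_num

lemma even_iff_of_bIdx_eq {l m : ℕ} (h : bIdx l = bIdx m) : Even l ↔ Even m := by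
  unfold bIdx at h; split_ifs at h <;> tauto

/-! ### Distances -/

lemma dist_same {l m : ℕ} (h : Even l ↔ Even m) :
    dist (q m) (q l) = √(((m : ℝ) * (m + 1) - l * (l + 1)) ^ 2 + 3 * ((m : ℝ) - l) ^ 2) := by
  have h3 : √3 ^ 2 = 3 := Real.sq_sqrt (by norm_num)
  rw [Complex.dist_eq_re_im, q_re, q_re]
  congr 1
  by_cases hm : Even m
  · rw [q_im_even hm, q_im_even (h.2 hm)]
    linear_combination ((m : ℝ) - l) ^ 2 * h3
  · rw [q_im_odd hm, q_im_odd (mt h.1 hm)]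
    linear_combination ((m : ℝ) - l) ^ 2 * h3

lemma dist_opp {l m : ℕ} (h : ¬ (Even l ↔ Even m)) :
    dist (q m) (q l) = √(((m : ℝ) * (m + 1) - l * (l + 1)) ^ 2 + 3 * ((m : ℝ) + l) ^ 2) := by
  have h3 : √3 ^ 2 = 3 := Real.sq_sqrt (by norm_num)
  rw [Complex.dist_eq_re_im, q_re, q_re]
  congr 1
  by_cases hm : Even m
  · rw [q_im_even hm, q_im_odd (by tauto)]
    linear_combination ((m : ℝ) + l) ^ 2 * h3
  · rw [q_im_odd hm, q_im_even (by tauto)]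
    linear_combination ((m : ℝ) + l) ^ 2 * h3

/-- From `q m` with `4 ≤ m`, the point two steps ahead is closer than any point ahead on the
other branch. Against `q (m-1)` the margin of the squared distances is `4m - 13`. -/
lemma dist_two_lt {k l : ℕ} (hk : 2 ≤ k) (hl : l < k + 2) (hp : ¬ (Even l ↔ Even (k + 2))) :
    dist (q (k + 2)) (q k) < dist (q (k + 2)) (q l) := by
  have hs : Even k ↔ Even (k + 2) := by simp [Nat.even_add]
  rw [dist_same hs, dist_opp hp]
  apply Real.sqrt_lt_sqrt (by positivity)
  have hk' : (2 : ℝ) ≤ k := by exact_mod_cast hk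
  have h0 : (0 : ℝ) ≤ l := l.cast_nonneg
  push_cast
  by_cases h1 : l = k + 1
  · subst h1
    push_cast
    nlinarith
  · have h2 : l ≠ k := by rintro rfl; exact hp hs
    have h3 : (l : ℝ) + 1 ≤ k := by exact_mod_cast (by omega : l + 1 ≤ k)
    have h4 : (l : ℝ) * (l + 1) ≤ k * (k + 1) := by nlinarith
    have h5 : (0 : ℝ) ≤ ((k : ℝ) + 2) * (k + 2 + 1) - k * (k + 1) := by nlinarith
    have h6 : (((k : ℝ) + 2) * (k + 2 + 1) - k * (k + 1)) ^ 2 ≤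
      (((k : ℝ) + 2) * (k + 2 + 1) - l * (l + 1)) ^ 2 := by gcongr
    nlinarith

/-- Among the points of larger index on the other branch, `q (l+1)` is the closest to `q l`. -/
lemma dist_succ_lt {l m : ℕ} (hm : l + 1 < m) (hp : ¬ (Even l ↔ Even m)) :
    dist (q l) (q (l + 1)) < dist (q l) (q m) := by
  have hs : ¬ (Even l ↔ Even (l + 1)) := by
    rw [Nat.even_add_one]; tauto
  rw [dist_comm (q l), dist_comm (q l), dist_opp hs, dist_opp hp]
  apply Real.sqrt_lt_sqrt (by positivity)
  have h0 : (0 : ℝ) ≤ l := l.cast_nonneg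
  have h1 : ((l + 1 : ℕ) : ℝ) < m := by exact_mod_cast hm
  have h2 : (l : ℝ) ≤ ((l + 1 : ℕ) : ℝ) := by push_cast; linarith
  have h3 : (l : ℝ) * (l + 1) ≤ ((l + 1 : ℕ) : ℝ) * (((l + 1 : ℕ) : ℝ) + 1) := by gcongr
  have h4 : (0 : ℝ) ≤ ((l + 1 : ℕ) : ℝ) * (((l + 1 : ℕ) : ℝ) + 1) - l * (l + 1) := by linarith
  gcongr

/-- Along a branch, the distance from `q l` to points of larger index increases with the index. -/
lemma dist_same_mono {l m j : ℕ} (hlm : l ≤ m) (hmj : m ≤ j) (hm : Even l ↔ Even m)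
    (hj : Even l ↔ Even j) : dist (q l) (q m) ≤ dist (q l) (q j) := by
  rw [dist_comm (q l), dist_comm (q l), dist_same hm, dist_same hj]
  apply Real.sqrt_le_sqrt
  have h1 : (l : ℝ) ≤ m := by exact_mod_cast hlm
  have h2 : (m : ℝ) ≤ j := by exact_mod_cast hmj
  have h0 : (0 : ℝ) ≤ l := l.cast_nonneg
  have h3 : (l : ℝ) * (l + 1) ≤ m * (m + 1) := by gcongr
  have h4 : (0 : ℝ) ≤ m * (m + 1) - l * (l + 1) := by linarith
  have h5 : (0 : ℝ) ≤ m - l := by linarith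
  gcongr

/-! ### Edges between the two branches -/

/-- No edge of `YY₆` runs from a larger index to a smaller one on the other branch, except
possibly `q 3 → q 2`. -/
lemma no_fwd {N l m : ℕ} (hl : 2 ≤ l) (hm : m ≤ N) (hlm : l < m)
    (hp : ¬ (Even l ↔ Even m)) (he : YaoYaoEdge (ptSet N) (q m) (q l)) : m = 3 := by
  by_contra h3
  obtain ⟨k, rfl⟩ : ∃ k, m = k + 2 := ⟨m - 2, by omega⟩
  have hk : 2 ≤ k := by omega
  have hc := (sec_fwd hlm).coneIdx_eq (one_le_fIdx _)
  have := he.1.2.2.2 (q k) (mem_ptSet.2 ⟨k, hk, by omega, rfl⟩)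
    (by rw [hc]; exact (sec_fwd (by omega)).mem_cone (q_ne (by omega)))
  exact absurd this (not_le.2 (dist_two_lt hk hlm hp))

lemma yaoEdge_two {N k : ℕ} (hk : 2 ≤ k) (hkN : k + 2 ≤ N) :
    YaoEdge (ptSet N) (q k) (q (k + 2)) := by
  refine ⟨mem_ptSet.2 ⟨k, hk, by omega, rfl⟩, mem_ptSet.2 ⟨k + 2, by omega, hkN, rfl⟩,
    q_ne (by omega), ?_⟩
  have hs : Even k ↔ Even (k + 2) := by simp [Nat.even_add]
  intro w hw hwc
  obtain ⟨j, hj2, hjN, rfl⟩ := mem_ptSet.1 hw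
  rw [(sec_bwd (by omega : k < k + 2)).coneIdx_eq (one_le_bIdx _)] at hwc
  rcases lt_trichotomy j k with h | rfl | h
  · exact absurd ((sec_fwd h).eq_of_mem_cone hwc) (fIdx_ne_bIdx _ _)
  · exact absurd rfl hwc.1
  · have hj := even_iff_of_bIdx_eq ((sec_bwd h).eq_of_mem_cone hwc)
    have hne : j ≠ k + 1 := by
      rintro rfl
      rw [← hs, Nat.even_add_one] at hj
      tauto
    exact dist_same_mono (by omega) (by omega) hs (hs.trans hj.symm)

/-- No edge of `YY₆` runs from a smaller index to a larger one on the other branch, except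
possibly `q 2 → q 3`. -/
lemma no_bwd {N l m : ℕ} (hl : 2 ≤ l) (hm : m ≤ N) (hlm : l < m)
    (hp : ¬ (Even l ↔ Even m)) (he : YaoYaoEdge (ptSet N) (q l) (q m)) : m = 3 := by
  by_contra h3
  have hml : m = l + 1 := by
    by_contra hne
    have hc := (sec_bwd hlm).coneIdx_eq (one_le_bIdx _)
    have hb : bIdx (l + 1) = bIdx m := by
      have : Even (l + 1) ↔ Even m := by rw [Nat.even_add_one]; tauto
      simp only [bIdx, this]
    have := he.1.2.2.2 (q (l + 1)) (mem_ptSet.2 ⟨l + 1, by omega, by omega, rfl⟩)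
      (by rw [hc, ← hb]; exact (sec_bwd (by omega)).mem_cone (q_ne (by omega)))
    exact absurd this (not_le.2 (dist_succ_lt (by omega) hp))
  obtain ⟨k, rfl⟩ : ∃ k, m = k + 2 := ⟨m - 2, by omega⟩
  have hk : 2 ≤ k := by omega
  -- `q (k+2)` sees both `q k` and `q l` in its forward cone, and `q k` is the closer one.
  have hcomp := he.2 (q k) (yaoEdge_two hk hm) (by
    rw [(sec_fwd hlm).coneIdx_eq (one_le_fIdx _),
      (sec_fwd (by omega : k < k + 2)).coneIdx_eq (one_le_fIdx _)])
  rw [dist_comm (q l), dist_comm (q k)] at hcomp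
  exact absurd hcomp (not_le.2 (dist_two_lt hk hlm hp))

lemma q_re_ge {m : ℕ} (h : m ≤ 3) : -12 ≤ (q m).re := by
  have h' : (m : ℝ) ≤ 3 := by exact_mod_cast h
  have h0 : (0 : ℝ) ≤ m := m.cast_nonneg
  rw [q_re]
  nlinarith

/-- An edge of `YY₆` either stays on its branch or starts at the far right end of the set. -/
lemma adj_cross {N : ℕ} {u w : ℂ} (h : YYAdj (ptSet N) u w) :
    (0 < u.im ↔ 0 < w.im) ∨ -12 ≤ u.re := by
  have hu : u ∈ ptSet N := by rcases h with h | h; exacts [h.1.1, h.1.2.1]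
  have hw : w ∈ ptSet N := by rcases h with h | h; exacts [h.1.2.1, h.1.1]
  obtain ⟨m, hm2, hmN, rfl⟩ := mem_ptSet.1 hu
  obtain ⟨l, hl2, hlN, rfl⟩ := mem_ptSet.1 hw
  rw [q_im_pos_iff hm2, q_im_pos_iff hl2]
  by_cases hp : Even m ↔ Even l
  · exact Or.inl hp
  · right
    have hp' : ¬ (Even l ↔ Even m) := fun h => hp h.symm
    rcases lt_trichotomy l m with hlm | rfl | hlm
    · rcases h with h | h
      · exact q_re_ge (no_fwd hl2 hmN hlm hp' h).le
      · exact q_re_ge (no_bwd hl2 hmN hlm hp' h).le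
    · exact absurd Iff.rfl hp
    · have : l = 3 := by
        rcases h with h | h
        · exact no_bwd hm2 hlN hlm hp h
        · exact no_fwd hm2 hlN hlm hp h
      exact q_re_ge (by omega)

/-! ### Paths -/

lemma pathLength_cons_cons (a b : ℂ) (p : List ℂ) :
    pathLength (a :: b :: p) = dist a b + pathLength (b :: p) := by
  simp [pathLength]

lemma dist_le_pathLength (p : List ℂ) : ∀ a z : ℂ, z ∈ a :: p → dist a z ≤ pathLength (a :: p) := by
  induction p with
  | nil =>
    intro a z hz
    obtain rfl : z = a := by simpa using hz
    simp [pathLength]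
  | cons b p ih =>
    intro a z hz
    rw [pathLength_cons_cons]
    rcases List.mem_cons.1 hz with rfl | hz
    · have := ih b b List.mem_cons_self
      rw [dist_self] at this ⊢
      have := dist_nonneg (x := z) (y := b)
      linarith
    · exact (dist_triangle a b z).trans (by linarith [ih b z hz])

/-- A path between the two branches visits the far right end of the set. -/
lemma exists_far {N : ℕ} (p : List ℂ) : ∀ a v : ℂ, (a :: p).IsChain (YYAdj (ptSet N)) →
    (a :: p).getLast? = some v → ¬ (0 < a.im ↔ 0 < v.im) → ∃ z ∈ a :: p, -12 ≤ z.re := by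
  induction p with
  | nil =>
    intro a v _ hv hav
    obtain rfl : a = v := by simpa using hv
    exact absurd Iff.rfl hav
  | cons b p ih =>
    intro a v hc hv hav
    rw [List.isChain_cons_cons] at hc
    rcases adj_cross hc.1 with h | h
    · obtain ⟨z, hz, hz'⟩ := ih b v hc.2 (by rwa [List.getLast?_cons_cons] at hv) (by rwa [← h])
      exact ⟨z, List.mem_cons_of_mem _ hz, hz'⟩
    · exact ⟨a, List.mem_cons_self, h⟩

/-! ### Convex and general position -/

/-- A point at which a linear functional attains its strict maximum over `S` is an extreme point
of the convex hull of `S`. -/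
lemma extreme_of_functional (f : ℂ →ₗ[ℝ] ℝ) {S : Set ℂ} {p : ℂ} (hp : p ∈ S)
    (h : ∀ z ∈ S, z ≠ p → f z < f p) : p ∈ Set.extremePoints ℝ (convexHull ℝ S) := by
  have hT : Convex ℝ {z : ℂ | z ≠ p → f z < f p} := by
    rw [convex_iff_forall_pos]
    intro x hx y hy a b ha hb hab hne
    have hle : ∀ z : ℂ, (z ≠ p → f z < f p) → f z ≤ f p := by
      intro z hz
      by_cases hzp : z = p
      · rw [hzp]
      · exact (hz hzp).le
    have hx' := hle x hx
    have hy' := hle y hy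
    simp only [map_add, map_smul, smul_eq_mul]
    have hb' : b = 1 - a := by linarith
    by_cases hxp : x = p
    · have hyp : y ≠ p := by
        rintro rfl
        exact hne (by rw [hxp, ← add_smul, hab, one_smul])
      have := mul_lt_mul_of_pos_left (hy hyp) hb
      have := mul_le_mul_of_nonneg_left hx' ha.le
      calc a * f x + b * f y < a * f p + b * f p := by linarith
        _ = f p := by rw [← add_mul, hab, one_mul]
    · have := mul_lt_mul_of_pos_left (hx hxp) ha
      have := mul_le_mul_of_nonneg_left hy' hb.le
      calc a * f x + b * f y < a * f p + b * f p := by linarith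
        _ = f p := by rw [← add_mul, hab, one_mul]
  have hsub : convexHull ℝ S ⊆ {z : ℂ | z ≠ p → f z < f p} := convexHull_min h hT
  refine ⟨subset_convexHull ℝ S hp, ?_⟩
  rintro x hx y hy ⟨a, b, ha, hb, hab, hxy⟩
  by_contra hxp
  have h1 := mul_lt_mul_of_pos_left (hsub hx hxp) ha
  have h2 : f y ≤ f p := by
    by_cases hyp : y = p
    · rw [hyp]
    · exact (hsub hy hyp).le
  have h3 := mul_le_mul_of_nonneg_left h2 hb.le
  have h4 : a * f x + b * f y = f p := by
    rw [← hxy, map_add, map_smul, map_smul, smul_eq_mul, smul_eq_mul]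
  have h5 : a * f p + b * f p = f p := by rw [← add_mul, hab, one_mul]
  linarith

lemma convexPos_ptSet (N : ℕ) : ConvexPos (ptSet N) := by
  intro p hp
  obtain ⟨m, hm2, hmN, rfl⟩ := mem_ptSet.1 hp
  -- On the curve with parameter `s = ±m`, the tangent at `s` gives the functional
  -- `x + (2 s + sign s) y / √3`.
  refine extreme_of_functional
    (Complex.reLm + ((-1) ^ m * (2 * (m : ℝ) + 1) / √3) • Complex.imLm) (by exact_mod_cast hp) ?_
  intro z hz hne
  obtain ⟨l, hl2, hlN, rfl⟩ := mem_ptSet.1 (by exact_mod_cast hz)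
  have hlm : l ≠ m := by rintro rfl; exact hne rfl
  have hl0 : (0 : ℝ) < l := by exact_mod_cast (by omega : 0 < l)
  have hm0 : (0 : ℝ) < m := by exact_mod_cast (by omega : 0 < m)
  have h3 : √3 ≠ 0 := by positivity
  have hsq : 0 < ((l : ℝ) - m) ^ 2 := by
    have : (l : ℝ) - m ≠ 0 := sub_ne_zero.2 (by exact_mod_cast hlm)
    positivity
  have e1 : ∀ k : ℕ, (-1) ^ m * (2 * (m : ℝ) + 1) / √3 * ((-1) ^ k * (√3 * k)) =
      ((-1) ^ m * (-1) ^ k) * ((2 * m + 1) * k) := by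
    intro k
    field_simp
  simp only [LinearMap.add_apply, LinearMap.smul_apply, Complex.reLm_coe, Complex.imLm_coe,
    smul_eq_mul, q, e1]
  have e2 : ((-1 : ℝ) ^ m * (-1) ^ m) = 1 := by rw [← mul_pow]; simp
  have e3 : ((-1 : ℝ) ^ m * (-1) ^ l) ≤ 1 := by
    rw [← pow_add]
    rcases neg_one_pow_eq_or ℝ (m + l) with h | h <;> rw [h] <;> norm_num
  have e4 := mul_le_mul_of_nonneg_right e3 (by positivity : (0 : ℝ) ≤ (2 * m + 1) * l)
  rw [e2]
  nlinarith

lemma genPos_ptSet (N : ℕ) : GenPos (ptSet N) := by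
  intro u hu v hv huv j
  obtain ⟨m, hm2, hmN, rfl⟩ := mem_ptSet.1 hu
  obtain ⟨l, hl2, hlN, rfl⟩ := mem_ptSet.1 hv
  rcases lt_trichotomy l m with h | rfl | h
  · exact (sec_fwd h).ne j
  · exact absurd rfl huv
  · exact (sec_bwd h).ne j

lemma dist_ends {N : ℕ} (hN : 1 ≤ N) : dist (q N) (q (N - 1)) ≤ 4 * N := by
  obtain ⟨k, rfl⟩ : ∃ k, N = k + 1 := ⟨N - 1, by omega⟩
  have hs : ¬ (Even k ↔ Even (k + 1)) := by
    rw [Nat.even_add_one]; tauto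
  have h0 : (0 : ℝ) ≤ k := k.cast_nonneg
  rw [Nat.add_sub_cancel, dist_opp hs]
  apply Real.sqrt_le_iff.2 ⟨by positivity, ?_⟩
  push_cast
  nlinarith

/-- `YY₆` is not a spanner, even for points in convex position: for every
real `t` there is a finite set `S` in convex and general position and `u, v ∈ S` such that
every path between `u` and `v` in `YY₆(S)` has length greater than `t·|uv|`. -/
theorem yaoYao6_not_spanner_convex :
    ∀ t : ℝ, ∃ S : Finset ℂ, ConvexPos S ∧ GenPos S ∧
      ∃ u ∈ S, ∃ v ∈ S, u ≠ v ∧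
        ∀ p : List ℂ, IsPath (YYAdj S) u v p → t * dist u v < pathLength p := by
  intro t
  obtain ⟨N, hN⟩ := exists_nat_ge (max (4 * t) 13)
  have hN1 : 4 * t ≤ N := (le_max_left _ _).trans hN
  have hN2 : (13 : ℝ) ≤ N := (le_max_right _ _).trans hN
  have hN3 : 13 ≤ N := by exact_mod_cast hN2
  refine ⟨ptSet N, convexPos_ptSet N, genPos_ptSet N, q N,
    mem_ptSet.2 ⟨N, by omega, le_rfl, rfl⟩, q (N - 1),
    mem_ptSet.2 ⟨N - 1, by omega, by omega, rfl⟩, q_ne (by omega), ?_⟩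
  rintro p ⟨hc, hh, hl⟩
  obtain ⟨p, rfl⟩ : ∃ p', p = q N :: p' := by
    cases p with
    | nil => simp at hh
    | cons a p' => exact ⟨p', by simpa using hh⟩
  obtain ⟨z, hz, hzre⟩ := exists_far p (q N) (q (N - 1)) hc hl (by
    rw [q_im_pos_iff (by omega), q_im_pos_iff (by omega)]
    obtain ⟨k, rfl⟩ : ∃ k, N = k + 1 := ⟨N - 1, by omega⟩
    rw [Nat.add_sub_cancel, Nat.even_add_one]; tauto)
  have h1 := dist_le_pathLength p (q N) z hz
  have h2 : (N : ℝ) * (N + 1) - 12 ≤ dist (q N) z := by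
    have := (neg_abs_le _).trans' (neg_le_neg (Complex.abs_re_le_norm (q N - z)))
    rw [Complex.sub_re, q_re] at this
    rw [dist_eq_norm]
    linarith
  have h3 := dist_ends (N := N) (by omega)
  have h4 : t * dist (q N) (q (N - 1)) ≤ (N : ℝ) * N := by
    have hd := dist_nonneg (x := q N) (y := q (N - 1))
    nlinarith
  linarith

end
end

section
/- Let S be a finite set of points in the plane in general position and let u→v be a directed edge of Θ₆(S). If the canonical triangle T(v,u) contains no point of S other than u and v, then u→v is an edge of ΘΘ₆(S). -/
/-!
The projective distance is symmetric: the cones of `u` containing `v` and of `v` containing `u`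
have opposite bisectors, so `‖uv‖ = ‖vu‖` (`projDist_comm`). If a competing edge `w → v`, with `w`
in the same cone of `v` as `u`, had `‖wv‖ < ‖uv‖`, then also `‖vw‖ < ‖vu‖`, so `w` would lie in
the canonical triangle `T(v,u)` (`mem_canonTri`). Emptiness of the triangle leaves only `w = u`,
contradicting the strict inequality, or `w = v`, impossible since an edge joins distinct points.
-/

open Real

noncomputable section

/-- The closed canonical triangle `T(a,b)`: the triangle bounded by the two rays from `a`
bounding the cone of `a` containing `b`, and the line through `b` perpendicular to the
bisector of that cone. -/
def canonTri (a b : ℂ) : Set ℂ :=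
  {p | ∃ s t : ℝ, 0 ≤ s ∧ 0 ≤ t ∧
    p = a + (s : ℂ) * Complex.exp (Complex.I * (((((coneIdx a b : ℝ) - 1) * (π / 3)) : ℝ) : ℂ))
          + (t : ℂ) * Complex.exp (Complex.I * ((((coneIdx a b : ℝ) * (π / 3)) : ℝ) : ℂ)) ∧
    ((p - a) * Complex.exp (-(Complex.I * (bisAngle a b : ℂ)))).re ≤ projDist a b}

theorem argIn_nonneg (z : ℂ) : 0 ≤ argIn z := by
  unfold argIn
  split_ifs with h
  · exact h
  · linarith [Complex.neg_pi_lt_arg z, Real.pi_pos]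

theorem norm_mul_exp_argIn (z : ℂ) :
    (‖z‖ : ℂ) * Complex.exp (Complex.I * (argIn z : ℂ)) = z := by
  have key : Complex.exp (Complex.I * (argIn z : ℂ))
      = Complex.exp ((Complex.arg z : ℂ) * Complex.I) := by
    unfold argIn
    split_ifs with h
    · rw [mul_comm]
    · push_cast
      rw [mul_comm, add_mul, Complex.exp_add, Complex.exp_two_pi_mul_I, mul_one]
  rw [key, Complex.norm_mul_exp_arg_mul_I]

/-- Negation turns the direction by a half turn, one way or the other. -/
theorem argIn_neg {z : ℂ} (hz : z ≠ 0) :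
    argIn (-z) = argIn z + π ∨ argIn z = argIn (-z) + π := by
  have hpi := Real.pi_pos
  have h1 := Complex.neg_pi_lt_arg z
  have h2 := Complex.arg_le_pi z
  unfold argIn
  rcases lt_trichotomy z.im 0 with him | him | him
  · rw [Complex.arg_neg_eq_arg_add_pi_of_im_neg him]
    have : Complex.arg z < 0 := Complex.arg_neg_iff.2 him
    rw [if_pos (by linarith), if_neg (by linarith)]
    right; ring
  · rcases lt_trichotomy z.re 0 with hre | hre | hre
    · have ha : Complex.arg z = π := Complex.arg_eq_pi_iff.2 ⟨hre, him⟩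
      have hb : Complex.arg (-z) = 0 :=
        Complex.arg_eq_zero_iff.2 ⟨by simp; linarith, by simp [him]⟩
      rw [ha, hb, if_pos le_rfl, if_pos hpi.le]
      right; ring
    · exact absurd (Complex.ext hre him) hz
    · have ha : Complex.arg z = 0 := Complex.arg_eq_zero_iff.2 ⟨hre.le, him⟩
      have hb : Complex.arg (-z) = π :=
        Complex.arg_eq_pi_iff.2 ⟨by simpa using hre, by simp [him]⟩
      rw [ha, hb, if_pos le_rfl, if_pos hpi.le]
      left; ring
  · rw [Complex.arg_neg_eq_arg_sub_pi_of_im_pos him]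
    have h3 : 0 ≤ Complex.arg z := Complex.arg_nonneg_iff.2 him.le
    have h4 : Complex.arg z ≠ π := fun h => him.ne' (Complex.arg_eq_pi_iff.1 h).2
    have h5 := lt_of_le_of_ne h2 h4
    rw [if_pos h3, if_neg (by linarith)]
    left; ring

theorem coneIdx_sub_one (u v : ℂ) :
    (coneIdx u v : ℝ) - 1 = (⌊argIn (v - u) / (π / 3)⌋ : ℝ) := by
  have h : 0 ≤ ⌊argIn (v - u) / (π / 3)⌋ :=
    Int.floor_nonneg.2 (div_nonneg (argIn_nonneg _) (by positivity))
  have h2 : (((⌊argIn (v - u) / (π / 3)⌋).toNat : ℤ) : ℝ) = (⌊argIn (v - u) / (π / 3)⌋ : ℝ) := by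
    rw [Int.toNat_of_nonneg h]
  unfold coneIdx
  push_cast at h2 ⊢
  linarith

theorem bisAngle_of_argIn_add_pi {u v : ℂ} (h : argIn (u - v) = argIn (v - u) + π) :
    bisAngle v u = bisAngle u v + π := by
  have hpi := Real.pi_pos
  unfold bisAngle
  rw [coneIdx_sub_one, coneIdx_sub_one, h]
  have : (argIn (v - u) + π) / (π / 3) = argIn (v - u) / (π / 3) + (3 : ℕ) := by
    push_cast; field_simp
  rw [this, Int.floor_add_natCast]
  push_cast
  ring

theorem projDist_eq_of_bisAngle {u v : ℂ} (h : bisAngle v u = bisAngle u v + π) :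
    projDist u v = projDist v u := by
  unfold projDist
  rw [h]
  have : Complex.exp (-(Complex.I * ((bisAngle u v + π : ℝ) : ℂ)))
      = -Complex.exp (-(Complex.I * (bisAngle u v : ℂ))) := by
    push_cast
    rw [show -(Complex.I * ((bisAngle u v : ℂ) + π)) = -(Complex.I * (bisAngle u v : ℂ)) - π * Complex.I
      by ring, Complex.exp_sub, Complex.exp_pi_mul_I]
    ring
  rw [this]
  congr 1
  ring

/-- The half-open cones at opposite angles are exact reflections of each other through the apex,
so `C(u,v)` and `C(v,u)` have opposite bisectors, even when `u` and `v` lie on a cone boundary. -/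
theorem projDist_comm {u v : ℂ} (h : u ≠ v) : projDist u v = projDist v u := by
  rcases argIn_neg (sub_ne_zero.2 h) with h1 | h1 <;> rw [neg_sub] at h1
  · exact (projDist_eq_of_bisAngle (bisAngle_of_argIn_add_pi h1)).symm
  · exact projDist_eq_of_bisAngle (bisAngle_of_argIn_add_pi h1)

/-- A direction at angle `θ` is the combination of the unit vectors at angles `a` and `a + π/3`
whose coefficients are given by the law of sines. -/
theorem exp_decomp (a θ : ℝ) :
    Complex.exp (Complex.I * (θ : ℂ)) =
      ((sin (a + π / 3 - θ) / sin (π / 3) : ℝ) : ℂ) * Complex.exp (Complex.I * (a : ℂ))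
      + ((sin (θ - a) / sin (π / 3) : ℝ) : ℂ) * Complex.exp (Complex.I * ((a + π / 3 : ℝ) : ℂ)) := by
  have hs : sin (π / 3) ≠ 0 := by rw [sin_pi_div_three]; positivity
  have e : ∀ x : ℝ, Complex.exp (Complex.I * (x : ℂ)) = ⟨cos x, sin x⟩ := by
    intro x
    rw [mul_comm, Complex.exp_mul_I]
    apply Complex.ext <;> simp [← Complex.ofReal_cos, ← Complex.ofReal_sin]
  rw [e, e, e]
  obtain ⟨b, rfl⟩ : ∃ b, θ = a + b := ⟨θ - a, by ring⟩
  rw [show a + π / 3 - (a + b) = π / 3 - b by ring, show a + b - a = b by ring]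
  apply Complex.ext
  · simp only [Complex.add_re, Complex.re_ofReal_mul, cos_add, sin_sub]
    field_simp
    ring
  · simp only [Complex.add_im, Complex.im_ofReal_mul, sin_add, sin_sub]
    field_simp
    ring

/-- A point in the same cone of `v` as `u`, and at most as far from `v` in projective distance,
lies in `T(v,u)`. -/
theorem mem_canonTri {u v w : ℂ} (hidx : coneIdx v w = coneIdx v u)
    (hle : projDist v w ≤ projDist v u) : w ∈ canonTri v u := by
  have hpi := Real.pi_pos
  have hbis : bisAngle v w = bisAngle v u := by unfold bisAngle; rw [hidx]
  unfold canonTri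
  rw [← hidx, ← hbis]
  set θ := argIn (w - v) with hθ
  set a := ((coneIdx v w : ℝ) - 1) * (π / 3) with ha
  have hk := coneIdx_sub_one v w
  have hlow : a ≤ θ := by
    rw [ha, hk, ← le_div_iff₀ (by positivity)]
    exact Int.floor_le _
  have hhigh : θ ≤ a + π / 3 := by
    have := (Int.lt_floor_add_one (argIn (w - v) / (π / 3))).le
    rw [div_le_iff₀ (by positivity), ← hk] at this
    rw [hθ, ha]; linarith
  have hsin : 0 ≤ sin (π / 3) := sin_nonneg_of_nonneg_of_le_pi (by linarith) (by linarith)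
  refine ⟨‖w - v‖ * (sin (a + π / 3 - θ) / sin (π / 3)), ‖w - v‖ * (sin (θ - a) / sin (π / 3)),
    ?_, ?_, ?_, hle⟩
  · exact mul_nonneg (norm_nonneg _) (div_nonneg
      (sin_nonneg_of_nonneg_of_le_pi (by linarith) (by linarith)) hsin)
  · exact mul_nonneg (norm_nonneg _) (div_nonneg
      (sin_nonneg_of_nonneg_of_le_pi (by linarith) (by linarith)) hsin)
  · have hz := norm_mul_exp_argIn (w - v)
    rw [← hθ, exp_decomp a θ] at hz
    rw [show (coneIdx v w : ℝ) * (π / 3) = a + π / 3 by rw [ha]; ring]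
    rw [Complex.ofReal_mul ‖w - v‖, Complex.ofReal_mul ‖w - v‖]
    linear_combination -hz

/-- If `u → v` is an edge of `Θ₆(S)` and the canonical triangle `T(v,u)`
contains no point of `S` other than `u` and `v`, then `u → v` is an edge of `ΘΘ₆(S)`. -/
theorem theta_edge_with_empty_canonical_triangle (S : Finset ℂ) (hgen : GenPos S)
    (u v : ℂ) (huv : ThetaEdge S u v)
    (hempty : ∀ w ∈ S, w ∈ canonTri v u → w = u ∨ w = v) :
    ThetaThetaEdge S u v := by
  refine ⟨huv, fun w hw hidx => ?_⟩
  by_contra! hlt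
  have hcomm : projDist w v = projDist v w := projDist_comm hw.2.2.1.symm
  have hcomm' : projDist u v = projDist v u := projDist_comm huv.2.2.1.symm
  rcases hempty w hw.1 (mem_canonTri hidx (by linarith)) with rfl | rfl
  · exact lt_irrefl _ hlt
  · exact hw.2.2.1 rfl

end
end

section
/- Let a and b be points in the plane with b ∈ C₁(a), and let α ∈ (0, π/3) be the angle between the segment ab and the clockwise (horizontal) bounding ray of C₁(a). Let i₁ be the intersection point of the counterclockwise bounding ray of C₁(a) (the ray from a in direction angle π/3) with the horizontal line through b, and let i₂, i₃, i₄ be the images of i₁ under counterclockwise rotation about a by the angles π/3, 2π/3, and 2π/3 + α, respectively. Then |bi₂| + |i₂i₃| + |i₃i₄| + |i₄a| < 4·|ab|. -/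
/-!
Put `d = |ab|`, let `α` be the angle of `b - a`, and let `r = |ai₁| = 2 d sin α / √3`. The segment
`bi₂` is horizontal, since `i₂` has the height of `i₁`, so `|bi₂| = d cos α + r / 2`; moreover
`|i₂i₃| = |i₄a| = r` and `|i₃i₄| = 2 r sin (α / 2)` is a chord of the circle of radius `r` about `a`.
The claim becomes `d cos α + r (5 / 2 + 2 sin (α / 2)) < 4 d`, with equality at `α = π / 3`.

With `s = sin (α / 2)` and `c = cos (α / 2)` this is `(2 s c / √3) (5 + 4 s) < 3 + 2 s²`. The tangent
bound `√3 c ≤ c² + 3 / 4`, exact at `α = π / 3`, turns it into a polynomial inequality in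
`s ∈ (0, 1/2)` which has `1 - 2 s` as a factor (`normalized_bound`).
-/

open Real

noncomputable section

/-- Distance between the images of `a + w` under the rotations about `a`
by `x` and `x + y`: a chord spanning the angle `y`. -/
lemma dist_chord (a w : ℂ) (r x y : ℝ) (hw : ‖w‖ = r) :
    dist (a + Complex.exp (Complex.I * (x : ℂ)) * w)
      (a + Complex.exp (Complex.I * ((x + y : ℝ) : ℂ)) * w) = |2 * Real.sin (y / 2)| * r := by
  rw [dist_comm, Complex.dist_eq]
  have : a + Complex.exp (Complex.I * ((x + y : ℝ) : ℂ)) * w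
      - (a + Complex.exp (Complex.I * (x : ℂ)) * w)
      = Complex.exp (Complex.I * (x : ℂ)) * (Complex.exp (Complex.I * (y : ℂ)) - 1) * w := by
    push_cast
    rw [mul_add, Complex.exp_add]
    ring
  rw [this, norm_mul, norm_mul, Complex.norm_exp_I_mul_ofReal,
    Complex.norm_exp_I_mul_ofReal_sub_one, hw, Real.norm_eq_abs, one_mul]

/-- The claimed inequality for `|ab| = 1`. -/
lemma normalized_bound (α : ℝ) (h0 : 0 < α) (h1 : α < π / 3) :
    Real.cos α + Real.sin α / Real.sin (π / 3) * (5 / 2 + 2 * Real.sin (α / 2)) < 4 := by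
  have hs0 : 0 < Real.sin (α / 2) := Real.sin_pos_of_pos_of_lt_pi (by linarith) (by linarith)
  have hs1 : Real.sin (α / 2) < 1 / 2 := by
    rw [← Real.sin_pi_div_six]
    exact Real.sin_lt_sin_of_lt_of_le_pi_div_two (by linarith) (by linarith) (by linarith)
  have hsc := Real.sin_sq_add_cos_sq (α / 2)
  have hcos : Real.cos α = 1 - 2 * Real.sin (α / 2) ^ 2 := by
    have := Real.cos_two_mul (α / 2)
    rw [show 2 * (α / 2) = α by ring] at this
    linarith
  have hsin : Real.sin α = 2 * Real.sin (α / 2) * Real.cos (α / 2) := by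
    have := Real.sin_two_mul (α / 2)
    rwa [show 2 * (α / 2) = α by ring] at this
  rw [hcos, hsin, Real.sin_pi_div_three]
  generalize Real.sin (α / 2) = s at *
  generalize Real.cos (α / 2) = c at *
  have h3 : √3 ^ 2 = 3 := Real.sq_sqrt (by norm_num)
  have hpos : 0 < √3 := by positivity
  have e : 2 * s * c / (√3 / 2) * (5 / 2 + 2 * s) = (√3 * c) * (2 * s * (5 + 4 * s) / 3) := by
    field_simp
    rw [h3]
    ring
  -- `(c - √3 / 2) ^ 2 ≥ 0`, with equality at `α = π / 3`
  have ht : √3 * c ≤ 7 / 4 - s ^ 2 := by nlinarith [sq_nonneg (c - √3 / 2)]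
  have hm := mul_le_mul_of_nonneg_right ht (show 0 ≤ 2 * s * (5 + 4 * s) / 3 by positivity)
  have hq : 0 < (1 - 2 * s) * (9 + s / 2 - 7 * s ^ 2 - 4 * s ^ 3) := by
    apply mul_pos (by linarith)
    nlinarith [mul_pos hs0 hs0, mul_pos (mul_pos hs0 hs0) hs0]
  rw [e]
  nlinarith

/-- With `b ∈ C₁(a)`, `α ∈ (0, π/3)` the angle of `ab` above the
horizontal, `i₁` the intersection of the ray from `a` at angle `π/3` with the horizontal
line through `b`, and `i₂, i₃, i₄` the rotations of `i₁` about `a` by `π/3`, `2π/3` and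
`2π/3 + α`, we have `|bi₂| + |i₂i₃| + |i₃i₄| + |i₄a| < 4·|ab|`. -/
theorem convex_region_perimeter_bound (a b : ℂ) (hb : b ∈ cone 1 a)
    (hα : 0 < argIn (b - a)) (hα' : argIn (b - a) < π / 3)
    (i₁ i₂ i₃ i₄ : ℂ)
    (h1 : i₁ = a + (((b - a).im / Real.sin (π / 3) : ℝ) : ℂ) *
        Complex.exp (Complex.I * ((π / 3 : ℝ) : ℂ)))
    (h2 : i₂ = a + Complex.exp (Complex.I * ((π / 3 : ℝ) : ℂ)) * (i₁ - a))
    (h3 : i₃ = a + Complex.exp (Complex.I * ((2 * π / 3 : ℝ) : ℂ)) * (i₁ - a))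
    (h4 : i₄ = a + Complex.exp (Complex.I * ((2 * π / 3 + argIn (b - a) : ℝ) : ℂ)) *
        (i₁ - a)) :
    dist b i₂ + dist i₂ i₃ + dist i₃ i₄ + dist i₄ a < 4 * dist a b := by
  have harg : argIn (b - a) = Complex.arg (b - a) := by
    unfold argIn at hα' ⊢
    split_ifs at hα' ⊢ with h
    · rfl
    · linarith [Complex.neg_pi_lt_arg (b - a), Real.pi_pos]
  have hne : b - a ≠ 0 := sub_ne_zero.mpr hb.1
  have hd : 0 < ‖b - a‖ := norm_pos_iff.mpr hne
  have hre : (b - a).re = ‖b - a‖ * Real.cos (argIn (b - a)) := by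
    rw [harg, Complex.norm_mul_cos_arg]
  have him : (b - a).im = ‖b - a‖ * Real.sin (argIn (b - a)) := by
    rw [harg, Complex.norm_mul_sin_arg]
  have hbound := normalized_bound _ hα hα'
  generalize argIn (b - a) = α at *
  have hsin : 0 < Real.sin α := Real.sin_pos_of_pos_of_lt_pi hα (by linarith [Real.pi_pos])
  have hcos : 0 < Real.cos α :=
    Real.cos_pos_of_mem_Ioo ⟨by linarith [Real.pi_pos], by linarith [Real.pi_pos]⟩
  have hhalf : 0 < Real.sin (α / 2) :=
    Real.sin_pos_of_pos_of_lt_pi (by linarith) (by linarith [Real.pi_pos])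
  have hs3 : 0 < Real.sin (π / 3) := by rw [Real.sin_pi_div_three]; positivity
  obtain ⟨r, hr⟩ : ∃ r, r = (b - a).im / Real.sin (π / 3) := ⟨_, rfl⟩
  have hr0 : 0 < r := by rw [hr, him]; positivity
  have hrs : r * Real.sin (π / 3) = (b - a).im := by rw [hr]; field_simp
  rw [← hr] at h1
  have hw : ‖i₁ - a‖ = r := by
    rw [h1, add_sub_cancel_left, norm_mul, Complex.norm_exp_I_mul_ofReal, Complex.norm_real,
      Real.norm_of_nonneg hr0.le, mul_one]
  have d23 : dist i₂ i₃ = r := by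
    rw [h2, h3, show (2 * π / 3 : ℝ) = π / 3 + π / 3 by ring, dist_chord _ _ r _ _ hw,
      show π / 3 / 2 = π / 6 by ring, Real.sin_pi_div_six]
    norm_num
  have d34 : dist i₃ i₄ = 2 * Real.sin (α / 2) * r := by
    rw [h3, h4, dist_chord _ _ r _ _ hw, abs_of_pos (by positivity)]
  have d4a : dist i₄ a = r := by
    rw [h4, Complex.dist_eq, add_sub_cancel_left, norm_mul, Complex.norm_exp_I_mul_ofReal, hw,
      one_mul]
  have db2 : dist b i₂ = (b - a).re + r / 2 := by
    -- `i₂` lies at angle `2 * π / 3` and at the height of `b`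
    have key : b - i₂ = (((b - a).re + r / 2 : ℝ) : ℂ) := by
      have e : b - i₂ = (b - a) - r * Complex.exp ((2 * π / 3 : ℝ) * Complex.I) := by
        rw [h2, h1, show ((2 * π / 3 : ℝ) : ℂ) * Complex.I
          = Complex.I * ((π / 3 : ℝ) : ℂ) + Complex.I * ((π / 3 : ℝ) : ℂ) by push_cast; ring,
          Complex.exp_add]
        ring
      have c2 : Real.cos (2 * π / 3) = -1 / 2 := by
        rw [show 2 * π / 3 = π - π / 3 by ring, Real.cos_pi_sub, Real.cos_pi_div_three]
        norm_num
      have s2 : Real.sin (2 * π / 3) = Real.sin (π / 3) := by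
        rw [show 2 * π / 3 = π - π / 3 by ring, Real.sin_pi_sub]
      rw [e]
      apply Complex.ext
      · rw [Complex.sub_re, Complex.re_ofReal_mul, Complex.exp_ofReal_mul_I_re, c2,
          Complex.ofReal_re]
        ring
      · rw [Complex.sub_im, Complex.im_ofReal_mul, Complex.exp_ofReal_mul_I_im, s2, hrs,
          Complex.ofReal_im, sub_self]
    rw [Complex.dist_eq, key, Complex.norm_real, Real.norm_of_nonneg]
    rw [hre]
    positivity
  have dab : dist a b = ‖b - a‖ := by rw [dist_comm, Complex.dist_eq]
  rw [d23, d34, d4a, db2, dab, hre]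
  have hr' : r = ‖b - a‖ * (Real.sin α / Real.sin (π / 3)) := by rw [hr, him]; ring
  rw [hr']
  nlinarith [mul_lt_mul_of_pos_left hbound hd]

end
end
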